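/- Let p be a prime with p ≡ 1, 7, 17, or 23 (mod 24). If p ≡ 1 or 7 (mod 24), then there are integers x, y with p = x^2 + 6y^2, and for any such x, Σ_{n=0}^{p-1} A_n · (-8)^{-n} ≡ 4x^2 (mod p). If p ≡ 17 or 23 (mod 24), then Σ_{n=0}^{p-1} A_n · (-8)^{-n} ≡ 0 (mod p). -/

import Mathlib

open Finset

/-- `A n = ∑_{k=0}^{n} C(2k,k)·C(2n-2k,n-k)·C(n,k)^2`. -/
def A (n : ℕ) : ℕ :=
  ∑ k ∈ Finset.range (n + 1),
    Nat.choose (2 * k) k * Nat.choose (2 * n - 2 * k) (n - k) * Nat.choose n k ^ 2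

/-!
Zeilberger's algorithm and Clausen's formula turn `∑ A n / (-8)ⁿ` modulo `p` into the square of
`∑ (3k)! / k!³ sᵏ` with `s (1 - 27 s) = 1 / 216`, that is `s = (2 + r) / 108` with `r² = 2`. By
expanding a `(p - 1) / 2`-th power, the latter sum is, modulo `p`, minus the character sum
`∑ χ(f(t))` of the cubic `f = X³ + (6 r - 15) X + (24 - 14 r)`, and the elliptic curve
`E : y² = f(x)` has complex multiplication by `ℤ[√-6]`.

*Split case.* The endomorphisms of `E` are the points over `𝔽_p(X)` of the twist `f y² = f(x)`, and
their degrees are the degrees of their `x`-coordinates, a quadratic form by the parallelogram law.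
On `ℤ[√-6]` this form is the norm, so that some `α = x + y √-6` has degree `p` and multiplies the
invariant differential by zero. A rational function of degree `p` with zero derivative is a Möbius
function of `X ^ p`, which leaves only `α = ± Frobenius`. Counting zeros, `F - 1` has degree
`p + 1 + ∑ χ(f(t))` for the Frobenius `F`, while `α ∓ 1` has degree `p + 1 ∓ 2 x`.

*Inert case.* Pull the differential `f ^ ((p - 1) / 2) dx` back along `√-6`, whose multiplier is not
in `𝔽_p`. The `(p - 1)`-st derivative (the Cartier operator) picks out the coefficient of
`X ^ (p - 1)`, which is the Hasse invariant, and shows that it equals its own negative.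
-/

namespace DombSum

open Polynomial

section Recurrences

theorem eq_of_recurrence {K : Type*} [Field K] {α β γ u v : ℕ → K} (hα : ∀ n, α n ≠ 0)
    (hu : ∀ n, α n * u (n + 2) - β n * u (n + 1) + γ n * u n = 0)
    (hv : ∀ n, α n * v (n + 2) - β n * v (n + 1) + γ n * v n = 0)
    (h₀ : u 0 = v 0) (h₁ : u 1 = v 1) : u = v := by
  funext n
  induction n using Nat.strong_induction_on with
  | _ n ih =>
    match n with
    | 0 => exact h₀
    | 1 => exact h₁
    | n + 2 =>
      have e₀ := ih n (by omega)
      have e₁ := ih (n + 1) (by omega)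
      apply mul_left_cancel₀ (hα n)
      linear_combination hu n - hv n + β n * e₁ - γ n * e₀

theorem cast_succ_mul_choose_succ (N r : ℕ) :
    ((r : ℚ) + 1) * (N.choose (r + 1) : ℚ) = (N.choose r : ℚ) * (N - r) := by
  rcases le_or_gt r N with h | h
  · rw [← Nat.cast_sub h, mul_comm]
    exact_mod_cast Nat.choose_succ_right_eq N r
  · simp [Nat.choose_eq_zero_of_lt h, Nat.choose_eq_zero_of_lt (h.trans r.lt_succ_self)]

theorem cast_choose_succ_right (N r : ℕ) :
    (N.choose (r + 1) : ℚ) = N.choose r * (N - r) / (r + 1) := by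
  rw [eq_div_iff (by positivity), mul_comm, cast_succ_mul_choose_succ]

theorem cast_choose_mul_succ (N r : ℕ) :
    (N.choose r : ℚ) * (N + 1) = (N + 1).choose r * (N + 1 - r) := by
  rcases le_or_gt r (N + 1) with h | h
  · have := Nat.choose_mul_succ_eq N r
    qify [h] at this
    exact this
  · simp [Nat.choose_eq_zero_of_lt h, Nat.choose_eq_zero_of_lt (N.lt_succ_self.trans h)]

theorem cast_choose_succ_succ (N r : ℕ) :
    ((N + 1).choose (r + 1) : ℚ) = (N + 1) * N.choose r / (r + 1) := by
  rw [eq_div_iff (by positivity)]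
  exact_mod_cast (Nat.add_one_mul_choose_eq N r).symm

theorem cast_centralBinom_succ (k : ℕ) :
    ((k + 1).centralBinom : ℚ) = 2 * (2 * k + 1) / (k + 1) * k.centralBinom := by
  rw [div_mul_eq_mul_div, eq_div_iff (by positivity), mul_comm]
  exact_mod_cast Nat.succ_mul_centralBinom_succ k

/-- The multinomial coefficient `(3k)! / k!³`. -/
def trichoose (k : ℕ) : ℕ := k.centralBinom * (3 * k).choose k

/-- The coefficient `(2k)! (3k)! / k!⁵` of the hypergeometric series `₃F₂(1/3, 1/2, 2/3; 1, 1)`, in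
the variable `108 x`. By Clausen's formula that series is the square of a `₂F₁`. -/
def clausenCoeff (k : ℕ) : ℕ := k.centralBinom * trichoose k

@[simp] theorem trichoose_zero : trichoose 0 = 1 := by simp [trichoose]

@[simp] theorem trichoose_one : trichoose 1 = 6 := by
  simp [trichoose, Nat.centralBinom]

@[simp] theorem clausenCoeff_zero : clausenCoeff 0 = 1 := by simp [clausenCoeff]

@[simp] theorem clausenCoeff_one : clausenCoeff 1 = 12 := by
  simp [clausenCoeff, Nat.centralBinom]

theorem trichoose_mul_factorial (k : ℕ) : trichoose k * k.factorial ^ 3 = (3 * k).factorial := by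
  have h₃ := Nat.choose_mul_factorial_mul_factorial (show k ≤ 3 * k by omega)
  have h₂ := Nat.choose_mul_factorial_mul_factorial (show k ≤ 2 * k by omega)
  rw [show 3 * k - k = 2 * k by omega] at h₃
  rw [show 2 * k - k = k by omega] at h₂
  rw [trichoose, Nat.centralBinom, ← h₃, ← h₂]
  ring

theorem cast_trichoose_succ (k : ℕ) :
    (trichoose (k + 1) : ℚ) = 3 * (3 * k + 1) * (3 * k + 2) / (k + 1) ^ 2 * trichoose k := by
  have h : (trichoose k : ℚ) * (k.factorial : ℚ) ^ 3 = (3 * k).factorial :=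
    mod_cast trichoose_mul_factorial k
  have h' : (trichoose (k + 1) : ℚ) * ((k + 1).factorial : ℚ) ^ 3 = (3 * (k + 1)).factorial :=
    mod_cast trichoose_mul_factorial (k + 1)
  rw [show 3 * (k + 1) = 3 * k + 1 + 1 + 1 by ring] at h'
  simp only [Nat.factorial_succ] at h'
  push_cast at h'
  rw [div_mul_eq_mul_div, eq_div_iff (by positivity)]
  apply mul_right_cancel₀ (b := ((k : ℚ) + 1) * (k.factorial : ℚ) ^ 3) (by positivity)
  linear_combination h' - (3 * k + 1) * (3 * k + 2) * (3 * k + 3) * h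

theorem cast_clausenCoeff_succ (k : ℕ) :
    (clausenCoeff (k + 1) : ℚ) =
      6 * (2 * k + 1) * (3 * k + 1) * (3 * k + 2) / (k + 1) ^ 3 * clausenCoeff k := by
  rw [clausenCoeff, clausenCoeff]
  push_cast
  rw [cast_centralBinom_succ, cast_trichoose_succ]
  field_simp
  ring

end Recurrences

/-! ### Domb numbers -/

section Domb

/-- `C(2k,k) / k!²`; the sequence `A n / n!²` is the convolution square of this one. -/
noncomputable def dombFactor (k : ℕ) : ℚ := k.centralBinom / (k.factorial : ℚ) ^ 2

@[simp] theorem dombFactor_zero : dombFactor 0 = 1 := by simp [dombFactor]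

theorem dombFactor_succ (k : ℕ) :
    dombFactor (k + 1) = 2 * (2 * k + 1) / (k + 1) ^ 3 * dombFactor k := by
  have : (k.factorial : ℚ) ≠ 0 := mod_cast k.factorial_ne_zero
  rw [dombFactor, dombFactor, Nat.factorial_succ, cast_centralBinom_succ]
  push_cast
  field_simp

theorem cast_A_eq_sum_dombFactor (n : ℕ) :
    (A n : ℚ) =
      (n.factorial : ℚ) ^ 2 * ∑ k ∈ range (n + 1), dombFactor k * dombFactor (n - k) := by
  rw [A, mul_sum]
  push_cast
  refine sum_congr rfl fun k hk => ?_
  have hkn : k ≤ n := Nat.lt_succ_iff.1 (mem_range.1 hk)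
  have : (k.factorial : ℚ) ≠ 0 := mod_cast k.factorial_ne_zero
  have : ((n - k).factorial : ℚ) ≠ 0 := mod_cast (n - k).factorial_ne_zero
  rw [show 2 * n - 2 * k = 2 * (n - k) by omega, Nat.cast_choose ℚ hkn, dombFactor, dombFactor,
    Nat.centralBinom, Nat.centralBinom]
  field_simp

/-- The numerator of the rational certificate which Zeilberger's algorithm produces for the
recurrence of the Domb numbers. -/
def dombCertificate (n k : ℚ) : ℚ :=
  -224 + 296 * k - 120 * k ^ 2 + 16 * k ^ 3 - 864 * n + 948 * n * k - 312 * n * k ^ 2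
    + 32 * n * k ^ 3 - 1304 * n ^ 2 + 1112 * n ^ 2 * k - 264 * n ^ 2 * k ^ 2
    + 16 * n ^ 2 * k ^ 3 - 960 * n ^ 3 + 564 * n ^ 3 * k - 72 * n ^ 3 * k ^ 2 - 344 * n ^ 4
    + 104 * n ^ 4 * k - 48 * n ^ 5

theorem sum_dombFactor_telescope (n K : ℕ) (hK : K ≤ n + 1) :
    ∑ k ∈ range K, (((n : ℚ) + 2) ^ 5 * (n + 1) ^ 2 * (dombFactor k * dombFactor (n + 2 - k))
      - 2 * (2 * n + 3) * (5 * (n + 1) ^ 2 + 5 * (n + 1) + 2) * (n + 1) ^ 2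
        * (dombFactor k * dombFactor (n + 1 - k))
      + 64 * (n + 1) ^ 3 * (dombFactor k * dombFactor (n - k))) =
    dombFactor K * dombFactor (n + 2 - K) * K ^ 3 * dombCertificate n K
      / (4 * (2 * ((n : ℚ) - K) + 3)) := by
  induction K with
  | zero => simp
  | succ k ih =>
    obtain ⟨j, rfl⟩ : ∃ j, n = k + j := ⟨n - k, by omega⟩
    have h₁ : (2 * (((k + j : ℕ) : ℚ) - k) + 3) = 2 * j + 3 := by push_cast; ring
    have h₂ : (2 * (((k + j : ℕ) : ℚ) - (k + 1 : ℕ)) + 3) = 2 * j + 1 := by push_cast; ring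
    rw [sum_range_succ, ih (by omega), h₁, h₂, show k + j + 2 - k = j + 1 + 1 by omega,
      show k + j + 1 - k = j + 1 by omega, show k + j - k = j by omega,
      show k + j + 2 - (k + 1) = j + 1 by omega, dombFactor_succ (j + 1), dombFactor_succ j,
      dombFactor_succ k]
    push_cast
    have : 2 * (j : ℚ) + 3 ≠ 0 := by positivity
    have : (j : ℚ) + 1 + 1 ≠ 0 := by positivity
    simp only [dombCertificate]
    field_simp
    ring

theorem A_recurrence (n : ℕ) :
    ((n : ℚ) + 2) ^ 3 * A (n + 2)
      - 2 * (2 * n + 3) * (5 * (n + 1) ^ 2 + 5 * (n + 1) + 2) * A (n + 1)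
      + 64 * (n + 1) ^ 3 * A n = 0 := by
  have h := sum_dombFactor_telescope n (n + 1) le_rfl
  rw [sum_add_distrib, sum_sub_distrib, ← mul_sum, ← mul_sum, ← mul_sum,
    show n + 2 - (n + 1) = 0 + 1 by omega, dombFactor_succ 0] at h
  rw [cast_A_eq_sum_dombFactor, cast_A_eq_sum_dombFactor, cast_A_eq_sum_dombFactor,
    sum_range_succ _ (n + 2), sum_range_succ _ (n + 1), show n + 1 + 1 = (n + 1) + 1 by rfl,
    sum_range_succ _ (n + 1), show n + 2 - (n + 1) = 0 + 1 by omega,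
    show n + 2 - (n + 2) = 0 by omega, show n + 1 - (n + 1) = 0 by omega,
    dombFactor_succ (n + 1), dombFactor_succ 0]
  generalize ∑ k ∈ range (n + 1), dombFactor k * dombFactor (n + 2 - k) = s₂ at *
  generalize ∑ k ∈ range (n + 1), dombFactor k * dombFactor (n + 1 - k) = s₁ at *
  generalize ∑ k ∈ range (n + 1), dombFactor k * dombFactor (n - k) = s₀ at *
  simp only [Nat.factorial_succ, dombCertificate, dombFactor_zero] at h ⊢
  push_cast at h ⊢
  have h₁ : 2 * ((n : ℚ) - (n + 1)) + 3 = 1 := by ring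
  simp only [show (n : ℚ) + 1 + 1 = n + 2 by ring, h₁] at h ⊢
  field_simp at h ⊢
  linear_combination (n + 1) ^ 2 * (n.factorial : ℚ) ^ 2 / 4 * h

/-- The summand of the Chan–Zudilin expansion of `A n / 4 ^ n`. -/
noncomputable def dombTerm (n k : ℕ) : ℚ := clausenCoeff k * (n + k).choose (3 * k) / 16 ^ k

theorem dombTerm_eq_zero {n k : ℕ} (h : n < 2 * k) : dombTerm n k = 0 := by
  simp [dombTerm, Nat.choose_eq_zero_of_lt (show n + k < 3 * k by omega)]

theorem dombTerm_eq_of_succ_left (n k : ℕ) :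
    dombTerm n k = (n - 2 * k + 1) / (n + k + 1) * dombTerm (n + 1) k := by
  have h := cast_choose_mul_succ (n + k) (3 * k)
  push_cast at h
  rw [dombTerm, dombTerm, show n + 1 + k = n + k + 1 by ring]
  field_simp
  linear_combination (clausenCoeff k : ℚ) * h

theorem dombTerm_succ_right (n k : ℕ) :
    dombTerm n (k + 1) = (2 * k + 1) * (n + k + 1) * (n - 2 * k) * (n - 2 * k - 1)
      / (8 * (k + 1) ^ 4) * dombTerm n k := by
  rw [dombTerm, dombTerm, show n + (k + 1) = n + k + 1 by ring,
    show 3 * (k + 1) = 3 * k + 2 + 1 by ring, cast_choose_succ_succ,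
    cast_choose_succ_right _ (3 * k + 1),
    cast_choose_succ_right, cast_clausenCoeff_succ, pow_succ]
  push_cast
  have : 3 * (k : ℚ) + 1 + 1 ≠ 0 := by positivity
  have : 3 * (k : ℚ) + 2 + 1 ≠ 0 := by positivity
  field_simp
  ring

theorem sum_dombTerm_telescope (n K : ℕ) :
    ∑ k ∈ range K, (((n : ℚ) + 2) ^ 3 * (16 * dombTerm (n + 2) k)
      - 2 * (2 * n + 3) * (5 * (n + 1) ^ 2 + 5 * (n + 1) + 2) * (4 * dombTerm (n + 1) k)
      + 64 * (n + 1) ^ 3 * dombTerm n k) =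
    -192 * (3 * n + 4) * K ^ 4 * dombTerm (n + 2) K / ((n + K + 1) * (n + K + 2)) := by
  induction K with
  | zero => simp
  | succ k ih =>
    rw [sum_range_succ, ih, dombTerm_succ_right, dombTerm_eq_of_succ_left n,
      dombTerm_eq_of_succ_left (n + 1)]
    push_cast
    have : (n : ℚ) + 1 + k + 1 ≠ 0 := by positivity
    have : (n : ℚ) + (k + 1) + 1 ≠ 0 := by positivity
    have : (n : ℚ) + (k + 1) + 2 ≠ 0 := by positivity
    field_simp
    ring

theorem sum_dombTerm_of_lt {n N : ℕ} (h : n < N) :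
    ∑ k ∈ range N, dombTerm n k = ∑ k ∈ range (n + 1), dombTerm n k := by
  refine (sum_subset (range_subset_range.2 h) fun k _ hk => ?_).symm
  rw [mem_range] at hk
  exact dombTerm_eq_zero (by omega)

theorem cast_A_eq_sum_dombTerm (n : ℕ) :
    (A n : ℚ) = 4 ^ n * ∑ k ∈ range (n + 1), dombTerm n k := by
  suffices h : (fun n => (A n : ℚ)) = fun n => 4 ^ n * ∑ k ∈ range (n + 1), dombTerm n k from
    congrFun h n
  refine eq_of_recurrence (α := fun n => ((n : ℚ) + 2) ^ 3) (fun n => by positivity) A_recurrence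
    (fun n => ?_) ?_ ?_
  · have h := sum_dombTerm_telescope n (n + 3)
    rw [dombTerm_eq_zero (by omega), mul_zero, zero_div, sum_add_distrib, sum_sub_distrib,
      ← mul_sum, ← mul_sum, ← mul_sum, ← mul_sum, ← mul_sum,
      sum_dombTerm_of_lt (n := n) (by omega), sum_dombTerm_of_lt (n := n + 1) (by omega)] at h
    linear_combination 4 ^ n * h
  · simp [A, dombTerm]
  · simp [A, dombTerm, sum_range_succ]

theorem A_eq_sum_clausenCoeff {n N : ℕ} (hn : n < N) :
    A n = ∑ k ∈ range N, clausenCoeff k * (n + k).choose (3 * k) * 4 ^ (n - 2 * k) := by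
  have h : (A n : ℚ) = ((∑ k ∈ range N,
      clausenCoeff k * (n + k).choose (3 * k) * 4 ^ (n - 2 * k) : ℕ) : ℚ) := by
    rw [cast_A_eq_sum_dombTerm, ← sum_dombTerm_of_lt hn, mul_sum]
    push_cast
    refine sum_congr rfl fun k _ => ?_
    rcases lt_or_ge n (2 * k) with hk | hk
    · simp [dombTerm_eq_zero hk, Nat.choose_eq_zero_of_lt (show n + k < 3 * k by omega)]
    · rw [dombTerm, pow_sub₀ _ (by norm_num) hk, pow_mul]
      norm_num
      field_simp
  exact_mod_cast h

end Domb

/-! ### Clausen's formula -/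

section Clausen

/-- The coefficient `β` of the recurrence `(n + 2)³ u (n + 2) - β n u (n + 1) + γ n u n = 0`
satisfied by both sides of Clausen's formula. -/
def clausenβ (n : ℚ) : ℚ := 54 * n ^ 3 + 243 * n ^ 2 + 375 * n + 198

/-- The coefficient `γ` of the recurrence `(n + 2)³ u (n + 2) - β n u (n + 1) + γ n u n = 0`
satisfied by both sides of Clausen's formula. -/
def clausenγ (n : ℚ) : ℚ := 729 * n ^ 3 + 2187 * n ^ 2 + 2106 * n + 648

theorem sum_trichoose_telescope (n K : ℕ) (hK : K ≤ n + 1) :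
    ∑ k ∈ range K, (((n : ℚ) + 2) ^ 3 * ((trichoose k : ℚ) * trichoose (n + 2 - k))
      - clausenβ n * ((trichoose k : ℚ) * trichoose (n + 1 - k))
      + clausenγ n * ((trichoose k : ℚ) * trichoose (n - k))) =
    (trichoose K : ℚ) * trichoose (n + 2 - K) * K ^ 2
      * (24 - 14 * K + 30 * n - 9 * n * K + 9 * n ^ 2)
      / ((3 * ((n : ℚ) - K) + 4) * (3 * ((n : ℚ) - K) + 5)) := by
  induction K with
  | zero => simp
  | succ k ih =>
    obtain ⟨j, rfl⟩ : ∃ j, n = k + j := ⟨n - k, by omega⟩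
    have h₁ : ((k + j : ℕ) : ℚ) - k = j := by push_cast; ring
    have h₂ : 3 * (((k + j : ℕ) : ℚ) - (k + 1 : ℕ)) + 4 = 3 * j + 1 := by push_cast; ring
    have h₃ : 3 * (((k + j : ℕ) : ℚ) - (k + 1 : ℕ)) + 5 = 3 * j + 2 := by push_cast; ring
    rw [sum_range_succ, ih (by omega), h₁, h₂, h₃, show k + j + 2 - k = j + 1 + 1 by omega,
      show k + j + 1 - k = j + 1 by omega, show k + j - k = j by omega,
      show k + j + 2 - (k + 1) = j + 1 by omega, cast_trichoose_succ (j + 1),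
      cast_trichoose_succ j, cast_trichoose_succ k]
    push_cast
    have : (j : ℚ) + 1 + 1 ≠ 0 := by positivity
    rw [show 3 * ((j : ℚ) + 1) + 1 = 3 * j + 4 by ring,
      show 3 * ((j : ℚ) + 1) + 2 = 3 * j + 5 by ring]
    simp only [clausenβ, clausenγ]
    field_simp
    ring

theorem sum_trichoose_recurrence (n : ℕ) :
    ((n : ℚ) + 2) ^ 3 * ∑ k ∈ range (n + 2 + 1), (trichoose k : ℚ) * trichoose (n + 2 - k)
      - clausenβ n * ∑ k ∈ range (n + 1 + 1), (trichoose k : ℚ) * trichoose (n + 1 - k)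
      + clausenγ n * ∑ k ∈ range (n + 1), (trichoose k : ℚ) * trichoose (n - k) = 0 := by
  have h := sum_trichoose_telescope n (n + 1) le_rfl
  rw [sum_add_distrib, sum_sub_distrib, ← mul_sum, ← mul_sum, ← mul_sum,
    show n + 2 - (n + 1) = 1 by omega] at h
  rw [sum_range_succ _ (n + 2), sum_range_succ _ (n + 1), sum_range_succ _ (n + 1),
    show n + 2 - (n + 1) = 1 by omega, show n + 2 - (n + 2) = 0 by omega,
    show n + 1 - (n + 1) = 0 by omega, cast_trichoose_succ (n + 1), trichoose_zero, trichoose_one]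
  rw [trichoose_one] at h
  push_cast at h ⊢
  have h₁ : 3 * ((n : ℚ) - (n + 1)) + 4 = 1 := by ring
  have h₂ : 3 * ((n : ℚ) - (n + 1)) + 5 = 2 := by ring
  rw [h₁, h₂] at h
  simp only [show (n : ℚ) + 1 + 1 = n + 2 by ring, clausenβ, clausenγ] at h ⊢
  field_simp at h ⊢
  linear_combination 1 / 2 * h

theorem sum_clausenCoeff_telescope (n K : ℕ) (hK : K ≤ n + 1) :
    ∑ k ∈ range K,
      (((n : ℚ) + 2) ^ 3 * ((clausenCoeff k : ℚ) * k.choose (n + 2 - k) * (-27) ^ (n + 2 - k))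
      - clausenβ n * ((clausenCoeff k : ℚ) * k.choose (n + 1 - k) * (-27) ^ (n + 1 - k))
      + clausenγ n * ((clausenCoeff k : ℚ) * k.choose (n - k) * (-27) ^ (n - k))) =
    -((clausenCoeff K : ℚ) * K.choose (n + 2 - K) * (-27) ^ (n + 2 - K)) * K ^ 2 * (n + 2) := by
  induction K with
  | zero => simp
  | succ k ih =>
    obtain ⟨j, rfl⟩ : ∃ j, n = k + j := ⟨n - k, by omega⟩
    rw [sum_range_succ, ih (by omega), show k + j + 2 - k = j + 1 + 1 by omega,
      show k + j + 1 - k = j + 1 by omega, show k + j - k = j by omega,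
      show k + j + 2 - (k + 1) = j + 1 by omega, cast_clausenCoeff_succ k,
      cast_choose_succ_right k (j + 1), cast_choose_succ_right k j, cast_choose_succ_succ]
    push_cast
    have : (j : ℚ) + 1 + 1 ≠ 0 := by positivity
    simp only [clausenβ, clausenγ, pow_succ (-27 : ℚ)]
    field_simp
    ring

theorem sum_clausenCoeff_recurrence (n : ℕ) :
    ((n : ℚ) + 2) ^ 3 * ∑ k ∈ range (n + 2 + 1),
        (clausenCoeff k : ℚ) * k.choose (n + 2 - k) * (-27) ^ (n + 2 - k)
      - clausenβ n * ∑ k ∈ range (n + 1 + 1),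
        (clausenCoeff k : ℚ) * k.choose (n + 1 - k) * (-27) ^ (n + 1 - k)
      + clausenγ n * ∑ k ∈ range (n + 1),
        (clausenCoeff k : ℚ) * k.choose (n - k) * (-27) ^ (n - k) = 0 := by
  have h := sum_clausenCoeff_telescope n (n + 1) le_rfl
  rw [sum_add_distrib, sum_sub_distrib, ← mul_sum, ← mul_sum, ← mul_sum,
    show n + 2 - (n + 1) = 1 by omega] at h
  rw [sum_range_succ _ (n + 2), sum_range_succ _ (n + 1), sum_range_succ _ (n + 1),
    show n + 2 - (n + 1) = 1 by omega, show n + 2 - (n + 2) = 0 by omega,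
    show n + 1 - (n + 1) = 0 by omega, cast_clausenCoeff_succ (n + 1)]
  simp only [Nat.choose_one_right, Nat.choose_zero_right, pow_one, pow_zero] at h ⊢
  push_cast at h ⊢
  simp only [show (n : ℚ) + 1 + 1 = n + 2 by ring, clausenβ, clausenγ] at h ⊢
  field_simp
  linear_combination h

/-- The coefficient of `s ^ n` in Clausen's formula
`∑ (2k)!(3k)!/k!⁵ (s(1 - 27s))ᵏ = (∑ (3k)!/k!³ sᵏ)²`. -/
theorem sum_clausenCoeff_eq_sum_trichoose (n : ℕ) :
    ∑ k ∈ range (n + 1), (clausenCoeff k : ℤ) * k.choose (n - k) * (-27) ^ (n - k)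
      = ∑ k ∈ range (n + 1), (trichoose k : ℤ) * trichoose (n - k) := by
  have h := congrFun (eq_of_recurrence
    (u := fun n => ∑ k ∈ range (n + 1), (clausenCoeff k : ℚ) * k.choose (n - k) * (-27) ^ (n - k))
    (v := fun n => ∑ k ∈ range (n + 1), (trichoose k : ℚ) * trichoose (n - k))
    (fun n => by positivity) sum_clausenCoeff_recurrence sum_trichoose_recurrence (by simp)
    (by norm_num [sum_range_succ])) n
  exact_mod_cast h

end Clausen

/-! ### Truncated hypergeometric sums modulo `p` -/

section ModP

variable {p : ℕ} [Fact p.Prime]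

theorem natCast_ne_zero_of_pos_of_lt {a : ℕ} (h₀ : 0 < a) (h : a < p) : (a : ZMod p) ≠ 0 := by
  rw [Ne, ZMod.natCast_eq_zero_iff]
  exact Nat.not_dvd_of_pos_of_lt h₀ h

theorem natCast_trichoose_eq_zero {k : ℕ} (h₁ : p ≤ 3 * k) (h₂ : k < p) :
    (trichoose k : ZMod p) = 0 := by
  have hp : p.Prime := Fact.out
  rw [ZMod.natCast_eq_zero_iff]
  have h : p ∣ trichoose k * k.factorial ^ 3 := by
    rw [trichoose_mul_factorial]
    exact hp.dvd_factorial.2 h₁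
  refine (hp.dvd_mul.1 h).resolve_right fun h' => ?_
  exact h₂.not_ge (hp.dvd_factorial.1 (hp.dvd_of_dvd_pow h'))

theorem natCast_clausenCoeff_eq_zero {k : ℕ} (h₁ : p ≤ 3 * k) (h₂ : k < p) :
    (clausenCoeff k : ZMod p) = 0 := by
  rw [clausenCoeff, Nat.cast_mul, natCast_trichoose_eq_zero h₁ h₂, mul_zero]

theorem sum_range_sum_range_eq_sum_diag {M : Type*} [AddCommMonoid M] {N : ℕ} {f : ℕ → ℕ → M}
    (hf : ∀ k l, k < N → l < N → N ≤ k + l → f k l = 0) :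
    ∑ k ∈ range N, ∑ l ∈ range N, f k l = ∑ n ∈ range N, ∑ k ∈ range (n + 1), f k (n - k) := by
  rw [sum_range_diag_flip]
  refine sum_congr rfl fun k hk => (sum_subset (range_subset_range.2 (N.sub_le k)) ?_).symm
  intro l hl hl'
  rw [mem_range] at *
  exact hf k l hk hl (by omega)

theorem sum_clausenCoeff_mul_pow_eq_sq (s : ZMod p) :
    ∑ k ∈ range p, (clausenCoeff k : ZMod p) * (s * (1 - 27 * s)) ^ k
      = (∑ k ∈ range p, (trichoose k : ZMod p) * s ^ k) ^ 2 := by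
  have hpow : ∀ k ∈ range p, (1 - 27 * s) ^ k = ∑ l ∈ range p, k.choose l * (-27) ^ l * s ^ l := by
    intro k hk
    rw [sub_eq_neg_add, add_pow,
      sum_subset (range_subset_range.2 (Nat.succ_le_of_lt (mem_range.1 hk)))]
    · refine sum_congr rfl fun l _ => ?_
      rw [one_pow, ← neg_mul, mul_pow]
      ring
    · intro l _ hl
      rw [mem_range] at hl
      simp [Nat.choose_eq_zero_of_lt (show k < l by omega)]
  have hleft : ∑ k ∈ range p, (clausenCoeff k : ZMod p) * (s * (1 - 27 * s)) ^ k =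
      ∑ k ∈ range p, ∑ l ∈ range p, clausenCoeff k * k.choose l * (-27) ^ l * s ^ (k + l) := by
    refine sum_congr rfl fun k hk => ?_
    rw [mul_pow, hpow k hk, mul_sum, mul_sum]
    exact sum_congr rfl fun l _ => by rw [pow_add]; ring
  have hright : (∑ k ∈ range p, (trichoose k : ZMod p) * s ^ k) ^ 2 =
      ∑ k ∈ range p, ∑ l ∈ range p, trichoose k * trichoose l * s ^ (k + l) := by
    rw [sq, sum_mul_sum]
    exact sum_congr rfl fun k _ => sum_congr rfl fun l _ => by rw [pow_add]; ring
  rw [hleft, hright, sum_range_sum_range_eq_sum_diag, sum_range_sum_range_eq_sum_diag]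
  · refine sum_congr rfl fun n _ => ?_
    have h := congrArg (Int.cast : ℤ → ZMod p) (sum_clausenCoeff_eq_sum_trichoose n)
    push_cast at h
    have hn : ∀ k ∈ range (n + 1), k + (n - k) = n := fun k hk => by
      rw [mem_range] at hk; omega
    rw [sum_congr rfl fun k hk => by rw [hn k hk], ← sum_mul, h, sum_mul]
    exact sum_congr rfl fun k hk => by rw [hn k hk]
  · intro k l hk hl hkl
    rcases le_or_gt p (3 * k) with h | h
    · rw [natCast_trichoose_eq_zero h hk]; ring
    · rw [natCast_trichoose_eq_zero (k := l) (by omega) hl]; ring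
  · intro k l hk hl hkl
    rcases le_or_gt p (3 * k) with h | h
    · rw [natCast_clausenCoeff_eq_zero h hk]; ring
    · simp [Nat.choose_eq_zero_of_lt (show k < l by omega)]

theorem natCast_choose_sub_one_sub {a j : ℕ} (h : a + j < p) :
    ((p - 1 - a).choose j : ZMod p) * (-1) ^ j = (a + j).choose j := by
  induction j with
  | zero => simp
  | succ j ih =>
    have h₁ := congrArg (Nat.cast : ℕ → ZMod p) (Nat.choose_succ_right_eq (p - 1 - a) j)
    have h₂ := congrArg (Nat.cast : ℕ → ZMod p) (Nat.add_one_mul_choose_eq (a + j) j)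
    have h₃ : ((p - 1 - a - j : ℕ) : ZMod p) = -((a + j + 1 : ℕ) : ZMod p) := by
      rw [eq_neg_iff_add_eq_zero, ← Nat.cast_add, show p - 1 - a - j + (a + j + 1) = p by omega,
        CharP.cast_eq_zero]
    rw [Nat.cast_mul, Nat.cast_mul] at h₁ h₂
    apply mul_right_cancel₀ (natCast_ne_zero_of_pos_of_lt j.succ_pos (by omega : j + 1 < p))
    rw [← add_assoc, ← h₂, ← ih (by omega), pow_succ]
    linear_combination -(-1) ^ j * (h₁ + ((p - 1 - a).choose j : ZMod p) * h₃)

theorem natCast_choose_half_mul_pow (hp : p ≠ 2) {i : ℕ} (h : i ≤ p / 2) :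
    ((p / 2).choose i : ZMod p) * (-4) ^ i = i.centralBinom := by
  have hodd := (Fact.out : p.Prime).eq_two_or_odd
  induction i with
  | zero => simp
  | succ j ih =>
    have h₁ := congrArg (Nat.cast : ℕ → ZMod p) (Nat.choose_succ_right_eq (p / 2) j)
    have h₂ := congrArg (Nat.cast : ℕ → ZMod p) (Nat.succ_mul_centralBinom_succ j)
    have h₃ : ((2 * (p / 2 - j) + (2 * j + 1) : ℕ) : ZMod p) = 0 := by
      rw [show 2 * (p / 2 - j) + (2 * j + 1) = p by omega, CharP.cast_eq_zero]
    apply mul_left_cancel₀ (natCast_ne_zero_of_pos_of_lt j.succ_pos (by omega : j + 1 < p))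
    push_cast at h₁ h₂ h₃ ⊢
    rw [h₂, ← ih (by omega), pow_succ]
    linear_combination (-4) ^ (j + 1) * h₁ - 2 * ((p / 2).choose j : ZMod p) * (-4) ^ j * h₃

theorem sum_choose_mul_pow {a M : ℕ} (x : ZMod p) (ha : a < p) (h₁ : p - a ≤ M) (h₂ : M ≤ p) :
    ∑ j ∈ range M, ((a + j).choose a : ZMod p) * x ^ j = (1 - x) ^ (p - 1 - a) := by
  rw [sub_eq_neg_add 1 x, add_pow, show p - 1 - a + 1 = p - a by omega,
    ← sum_subset (range_subset_range.2 h₁)]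
  · refine sum_congr rfl fun j hj => ?_
    rw [mem_range] at hj
    rw [Nat.choose_symm_add, ← natCast_choose_sub_one_sub (by omega), one_pow, neg_pow]
    ring
  · intro j hj hj'
    rw [mem_range] at hj hj'
    have hdvd := (Fact.out : p.Prime).dvd_choose_add ha (by omega : j < p) (by omega)
    rw [(ZMod.natCast_eq_zero_iff _ _).2 hdvd, zero_mul]

theorem sum_choose_mul_four_pow_mul_pow {x : ZMod p} (hx : 1 - 4 * x ≠ 0) {k : ℕ} (hk : 3 * k < p) :
    ∑ n ∈ range p, ((n + k).choose (3 * k) : ZMod p) * 4 ^ (n - 2 * k) * x ^ n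
      = (x ^ 2 / (1 - 4 * x) ^ 3) ^ k := by
  have hterm : ∀ j ∈ range (p - 2 * k),
      ((2 * k + j + k).choose (3 * k) : ZMod p) * 4 ^ (2 * k + j - 2 * k) * x ^ (2 * k + j)
        = x ^ (2 * k) * ((3 * k + j).choose (3 * k) * (4 * x) ^ j) := by
    intro j _
    rw [show 2 * k + j + k = 3 * k + j by ring, show 2 * k + j - 2 * k = j by omega, pow_add,
      mul_pow]
    ring
  rw [show range p = range (2 * k + (p - 2 * k)) by congr 1; omega, sum_range_add, sum_eq_zero,
    zero_add, sum_congr rfl hterm, ← mul_sum,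
    sum_choose_mul_pow _ hk (by omega) (by omega), div_pow, ← pow_mul, ← pow_mul,
    eq_div_iff (pow_ne_zero _ hx), mul_assoc, ← pow_add,
    show p - 1 - 3 * k + 3 * k = p - 1 by omega,
    ZMod.pow_card_sub_one_eq_one hx, mul_one]
  intro n hn
  rw [mem_range] at hn
  simp [Nat.choose_eq_zero_of_lt (show n + k < 3 * k by omega)]

theorem sum_A_mul_pow {x : ZMod p} (hx : 1 - 4 * x ≠ 0) :
    ∑ n ∈ range p, (A n : ZMod p) * x ^ n
      = ∑ k ∈ range p, (clausenCoeff k : ZMod p) * (x ^ 2 / (1 - 4 * x) ^ 3) ^ k := by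
  have hA : ∀ n ∈ range p, (A n : ZMod p) * x ^ n = ∑ k ∈ range p,
      (clausenCoeff k : ZMod p) * ((n + k).choose (3 * k) * 4 ^ (n - 2 * k) * x ^ n) := by
    intro n hn
    rw [A_eq_sum_clausenCoeff (mem_range.1 hn)]
    push_cast
    rw [sum_mul]
    exact sum_congr rfl fun k _ => by ring
  rw [sum_congr rfl hA, sum_comm]
  refine sum_congr rfl fun k hk => ?_
  rw [← mul_sum]
  rcases le_or_gt p (3 * k) with h | h
  · rw [natCast_clausenCoeff_eq_zero h (mem_range.1 hk), zero_mul, zero_mul]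
  · rw [sum_choose_mul_four_pow_mul_pow hx h]

theorem coeff_four_mul_X_cube_add_sq_pow (hp : p ≠ 2) (s : ZMod p) :
    ((C 4 * X ^ 3 + (X + C s) ^ 2 : (ZMod p)[X]) ^ (p / 2)).coeff (p - 1)
      = ∑ k ∈ range p, (trichoose k : ZMod p) * s ^ k := by
  have hodd := (Fact.out : p.Prime).eq_two_or_odd
  rw [add_pow, finsetSum_coeff,
    ← sum_subset (range_subset_range.2 (show p / 2 + 1 ≤ p by omega))]
  · refine sum_congr rfl fun i hi => ?_
    rw [mem_range] at hi
    have hterm : (C 4 * X ^ 3 : (ZMod p)[X]) ^ i * ((X + C s) ^ 2) ^ (p / 2 - i)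
          * ((p / 2).choose i : (ZMod p)[X])
        = C (4 ^ i * ((p / 2).choose i : ZMod p)) *
          ((X + C s) ^ (p - 1 - 2 * i) * X ^ (3 * i)) := by
      rw [show p - 1 - 2 * i = 2 * (p / 2 - i) by omega, C_mul, C_pow, map_natCast,
        pow_mul (X + C s) 2]
      ring
    rw [hterm, coeff_C_mul, coeff_mul_X_pow']
    split_ifs with h
    · have h₁ := natCast_choose_half_mul_pow hp (show i ≤ p / 2 by omega)
      have h₂ := natCast_choose_sub_one_sub (p := p) (a := 2 * i) (j := i) (by omega)
      have h₃ : (-1 : ZMod p) ^ i * (-1) ^ i = 1 := by rw [← mul_pow]; norm_num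
      rw [coeff_X_add_C_pow, ← Nat.choose_symm (show p - 1 - 3 * i ≤ p - 1 - 2 * i by omega),
        show p - 1 - 2 * i - (p - 1 - 3 * i) = i by omega, trichoose,
        show 3 * i = 2 * i + i by ring, Nat.cast_mul, ← h₁, ← h₂, neg_pow 4]
      linear_combination
        (-4 ^ i * (p / 2).choose i * (p - 1 - 2 * i).choose i * s ^ i : ZMod p) * h₃
    · rw [natCast_trichoose_eq_zero (by omega) (by omega)]
      simp
  · intro i hi hi'
    rw [mem_range] at hi hi'
    rw [natCast_trichoose_eq_zero (by omega) hi, zero_mul]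

end ModP

section FiniteField

variable {F : Type*} [Field F] [Fintype F]

theorem sum_pow_card_sub_one : ∑ c : F, c ^ (Fintype.card F - 1) = -1 := by
  classical
  have hcard := Fintype.one_lt_card (α := F)
  have hpow : ∀ c : F, c ^ (Fintype.card F - 1) = 1 - if c = 0 then 1 else 0 := by
    intro c
    split_ifs with hc
    · rw [hc, zero_pow (by omega), sub_self]
    · rw [FiniteField.pow_card_sub_one_eq_one c hc, sub_zero]
  simp_rw [hpow]
  simp

theorem sum_pow_eq_ite {j : ℕ} (hj : j < 2 * (Fintype.card F - 1)) :
    ∑ c : F, c ^ j = if j = Fintype.card F - 1 then -1 else 0 := by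
  have := Fintype.one_lt_card (α := F)
  split_ifs with h
  · rw [h, sum_pow_card_sub_one]
  rcases lt_or_gt_of_ne h with h | h
  · exact FiniteField.sum_pow_lt_card_sub_one _ j h
  · rw [← FiniteField.sum_pow_lt_card_sub_one F (j - (Fintype.card F - 1)) (by omega)]
    refine sum_congr rfl fun c _ => ?_
    rcases eq_or_ne c 0 with rfl | hc
    · rw [zero_pow (by omega), zero_pow (by omega)]
    · rw [← mul_one (c ^ (j - _)), ← FiniteField.pow_card_sub_one_eq_one c hc, ← pow_add,
        Nat.sub_add_cancel h.le]

theorem sum_eval_eq_neg_coeff {g : F[X]} (hg : g.natDegree < 2 * (Fintype.card F - 1)) :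
    ∑ c : F, g.eval c = -g.coeff (Fintype.card F - 1) := by
  have := Fintype.one_lt_card (α := F)
  simp_rw [eval_eq_sum_range' hg]
  rw [sum_comm, sum_congr rfl fun j hj => by rw [← mul_sum, sum_pow_eq_ite (mem_range.1 hj)],
    sum_eq_single (Fintype.card F - 1)]
  · simp
  · intro j _ hj
    simp [hj]
  · intro h
    exact absurd (mem_range.2 (by omega)) h

end FiniteField

/-! ### Degrees of primitive polynomial vectors -/

section PrimitiveVec

variable {ι R : Type*} [CommRing R]

/-- The entries of `x` generate the unit ideal, so that `x` has no zero modulo any prime; over a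
principal ideal ring these are the normalised homogeneous coordinates of a rational point. -/
def IsPrimitiveVec (x : ι → R) : Prop := Ideal.span (Set.range x) = ⊤

theorem isPrimitiveVec_fin_two {x : Fin 2 → R} : IsPrimitiveVec x ↔ IsCoprime (x 0) (x 1) := by
  have hrange : Set.range x = {x 0, x 1} := by
    ext
    simp only [Set.mem_range, Fin.exists_fin_two, Set.mem_insert_iff, Set.mem_singleton_iff,
      eq_comm]
  rw [IsPrimitiveVec, hrange, Ideal.eq_top_iff_one, Ideal.mem_span_pair]
  rfl

theorem IsPrimitiveVec.exists_notMem {x : ι → R} (hx : IsPrimitiveVec x) (m : Ideal R)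
    (hm : m ≠ ⊤) : ∃ i, x i ∉ m := by
  by_contra! h
  exact hm (top_le_iff.1 (hx ▸ Ideal.span_le.2 (Set.range_subset_iff.2 h)))

theorem isPrimitiveVec_of_forall_isMaximal {x : ι → R}
    (h : ∀ m : Ideal R, m.IsMaximal → ∃ i, x i ∉ m) : IsPrimitiveVec x := by
  by_contra hx
  obtain ⟨m, hm, hle⟩ := Ideal.exists_le_maximal _ hx
  obtain ⟨i, hi⟩ := h m hm
  exact hi (hle (Ideal.subset_span ⟨i, rfl⟩))

theorem IsPrimitiveVec.ne_zero [Nontrivial R] {x : ι → R} (hx : IsPrimitiveVec x) : x ≠ 0 := by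
  rintro rfl
  obtain ⟨i, hi⟩ := hx.exists_notMem ⊥ bot_ne_top
  exact hi rfl

theorem IsPrimitiveVec.exists_sum_mul_eq_one [Fintype ι] {x : ι → R} (hx : IsPrimitiveVec x) :
    ∃ c : ι → R, ∑ i, c i * x i = 1 := by
  have h : (1 : R) ∈ Ideal.span (Set.range x) := hx ▸ Submodule.mem_top
  simpa only [smul_eq_mul] using (Submodule.mem_span_range_iff_exists_fun R).1 h

/-- The coefficients of `(x₀ T + x₁) (y₀ T + y₁)`: homogeneous coordinates for an unordered pair
of points of the projective line. -/
def symmProd (x y : Fin 2 → R) : Fin 3 → R := ![x 0 * y 0, x 0 * y 1 + x 1 * y 0, x 1 * y 1]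

theorem IsPrimitiveVec.symmProd {x y : Fin 2 → R} (hx : IsPrimitiveVec x)
    (hy : IsPrimitiveVec y) : IsPrimitiveVec (symmProd x y) := by
  refine isPrimitiveVec_of_forall_isMaximal fun m hm => ?_
  by_contra! h
  have h₀ : x 0 * y 0 ∈ m := h 0
  have h₁ : x 0 * y 1 + x 1 * y 0 ∈ m := h 1
  have h₂ : x 1 * y 1 ∈ m := h 2
  have hx' := hx.exists_notMem m hm.ne_top
  have hy' := hy.exists_notMem m hm.ne_top
  simp only [Fin.exists_fin_two] at hx' hy'
  rcases hm.isPrime.mem_or_mem h₀ with hx₀ | hy₀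
  · have hy₁ := (hm.isPrime.mem_or_mem h₂).resolve_left (hx'.resolve_left (not_not.2 hx₀))
    rw [Ideal.add_mem_iff_right _ (m.mul_mem_right _ hx₀)] at h₁
    exact (hm.isPrime.mem_or_mem h₁).elim (hx'.resolve_left (not_not.2 hx₀))
      (hy'.resolve_right (not_not.2 hy₁))
  · have hx₁ := (hm.isPrime.mem_or_mem h₂).resolve_right (hy'.resolve_left (not_not.2 hy₀))
    rw [Ideal.add_mem_iff_left _ (m.mul_mem_left _ hy₀)] at h₁
    exact (hm.isPrime.mem_or_mem h₁).elim (hx'.resolve_right (not_not.2 hx₁))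
      (hy'.resolve_left (not_not.2 hy₀))

theorem symmProd_ne_zero {F : Type*} [Field F] {x y : Fin 2 → F} (hx : x ≠ 0) (hy : y ≠ 0) :
    symmProd x y ≠ 0 := by
  have key {z : Fin 2 → F} (hz : z ≠ 0) : IsPrimitiveVec z := by
    obtain ⟨i, hi⟩ := Function.ne_iff.1 hz
    exact Ideal.eq_top_of_isUnit_mem _ (Ideal.subset_span ⟨i, rfl⟩) (isUnit_iff_ne_zero.2 hi)
  exact ((key hx).symmProd (key hy)).ne_zero

theorem IsPrimitiveVec.exists_units_smul_eq [Finite ι] {K : Type*} [Field K] [Algebra R K]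
    [FaithfulSMul R K] {x y : ι → R} (hx : IsPrimitiveVec x) (hy : IsPrimitiveVec y) {κ : K}
    (h : ∀ i, algebraMap R K (x i) = κ * algebraMap R K (y i)) : ∃ u : Rˣ, x = u • y := by
  have := Fintype.ofFinite ι
  have inj := FaithfulSMul.algebraMap_injective R K
  obtain ⟨c, hc⟩ := hx.exists_sum_mul_eq_one
  obtain ⟨d, hd⟩ := hy.exists_sum_mul_eq_one
  have hκ : κ = algebraMap R K (∑ i, d i * x i) := by
    rw [← mul_one κ, ← map_one (algebraMap R K), ← hd, map_sum, map_sum, mul_sum]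
    refine sum_congr rfl fun i _ => ?_
    rw [map_mul, map_mul, h, mul_left_comm]
  have hxy (i : ι) : x i = (∑ j, d j * x j) * y i := inj (by rw [h, map_mul, ← hκ])
  have hu : (∑ j, d j * x j) * ∑ i, c i * y i = 1 := by
    rw [← hc, mul_sum]
    exact sum_congr rfl fun i _ => by rw [mul_left_comm, ← hxy]
  exact ⟨Units.mkOfMulEqOne _ _ hu, funext hxy⟩

end PrimitiveVec

theorem natDegree_aeval_le_and_coeff_aeval {ι k : Type*} [Finite ι] [CommSemiring k]
    {F : MvPolynomial ι k} {d : ℕ} (hF : F.IsHomogeneous d) {x : ι → k[X]} {n : ℕ}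
    (hx : ∀ i, (x i).natDegree ≤ n) :
    (MvPolynomial.aeval x F).natDegree ≤ d * n ∧
      (MvPolynomial.aeval x F).coeff (d * n) = MvPolynomial.eval (fun i => (x i).coeff n) F := by
  have := Fintype.ofFinite ι
  have hmonomial (m : ι →₀ ℕ) (hm : m ∈ F.support) : (∏ i, x i ^ m i).natDegree ≤ d * n ∧
      (∏ i, x i ^ m i).coeff (d * n) = ∏ i, (x i).coeff n ^ m i := by
    have hd : d = ∑ i, m i := by
      rw [← hF (MvPolynomial.mem_support_iff.1 hm), Finsupp.weight_apply, Finsupp.sum_fintype] <;>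
        simp
    rw [hd, sum_mul]
    induction (univ : Finset ι) using Finset.cons_induction with
    | empty => simp
    | cons i s hi ih =>
      simp only [prod_cons, sum_cons]
      have hpow := natDegree_pow_le_of_le (m i) (hx i)
      exact ⟨natDegree_mul_le_of_le hpow ih.1, by
        rw [coeff_mul_add_eq_of_natDegree_le hpow ih.1, ih.2, coeff_pow_of_natDegree_le (hx i)]⟩
  rw [MvPolynomial.aeval_def, MvPolynomial.eval₂_eq', MvPolynomial.eval_eq', finsetSum_coeff]
  refine ⟨natDegree_sum_le_of_forall_le _ _ fun m hm => ?_, sum_congr rfl fun m hm => ?_⟩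
  · exact (natDegree_C_mul_le _ _).trans (hmonomial m hm).1
  · rw [algebraMap_eq, coeff_C_mul, (hmonomial m hm).2]

section VecDegree

variable {ι k : Type*} [Fintype ι] [Field k]

/-- The degree of the rational map with homogeneous coordinates `x`, when `x` is primitive. -/
def vecDegree (x : ι → k[X]) : ℕ := univ.sup fun i => (x i).natDegree

/-- Homogeneous coordinates for the value at infinity of the rational map given by `x`. -/
def leadingVec (x : ι → k[X]) : ι → k := fun i => (x i).coeff (vecDegree x)

theorem natDegree_le_vecDegree (x : ι → k[X]) (i : ι) : (x i).natDegree ≤ vecDegree x :=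
  le_sup (f := fun i => (x i).natDegree) (mem_univ i)

theorem leadingVec_ne_zero {x : ι → k[X]} (hx : x ≠ 0) : leadingVec x ≠ 0 := by
  obtain ⟨j, hj⟩ := Function.ne_iff.1 hx
  obtain ⟨i, -, hi⟩ := exists_mem_eq_sup univ ⟨j, mem_univ j⟩ fun i => (x i).natDegree
  intro h
  have hxi : (x i).coeff (vecDegree x) = 0 := congrFun h i
  rw [vecDegree, hi, coeff_natDegree, leadingCoeff_eq_zero] at hxi
  have hdeg : vecDegree x = 0 := by rw [vecDegree, hi, hxi, natDegree_zero]
  have hconst := eq_C_of_natDegree_le_zero (hdeg ▸ natDegree_le_vecDegree x j)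
  have hxj : (x j).coeff (vecDegree x) = 0 := congrFun h j
  rw [hdeg] at hxj
  exact hj (by rw [hconst, hxj, C_0, Pi.zero_apply])

theorem vecDegree_pair (u v : k[X]) : vecDegree ![u, v] = max u.natDegree v.natDegree := by
  rw [vecDegree, Fin.univ_succ, sup_cons]
  simp

theorem vecDegree_eq_of_coeff_ne_zero {x : ι → k[X]} {n : ℕ} (hle : ∀ i, (x i).natDegree ≤ n)
    (hne : (fun i => (x i).coeff n) ≠ 0) : vecDegree x = n := by
  refine le_antisymm (Finset.sup_le fun i _ => hle i) ?_
  obtain ⟨i, hi⟩ := Function.ne_iff.1 hne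
  exact (le_natDegree_of_ne_zero hi).trans (natDegree_le_vecDegree x i)

theorem leadingVec_eq_of_coeff_ne_zero {x : ι → k[X]} {n : ℕ} (hle : ∀ i, (x i).natDegree ≤ n)
    (hne : (fun i => (x i).coeff n) ≠ 0) : leadingVec x = fun i => (x i).coeff n := by
  ext i
  rw [leadingVec, vecDegree_eq_of_coeff_ne_zero hle hne]

theorem exists_smul_of_units_smul {x y : ι → k[X]} {u : k[X]ˣ} (h : x = u • y) (hy : y ≠ 0) :
    ∃ a : k, a ≠ 0 ∧ vecDegree x = vecDegree y ∧ leadingVec x = a • leadingVec y := by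
  obtain ⟨a, ha, hua⟩ := isUnit_iff.1 u.isUnit
  have hxy : x = C a • y := by rw [h, hua]; rfl
  have hle (i : ι) : (x i).natDegree ≤ vecDegree y := by
    rw [hxy]
    exact natDegree_C_mul_le a (y i) |>.trans (natDegree_le_vecDegree y i)
  have hcoeff : (fun i => (x i).coeff (vecDegree y)) = a • leadingVec y := by
    ext i
    simp only [hxy, Pi.smul_apply, smul_eq_mul, coeff_C_mul, leadingVec]
  have hne := hcoeff ▸ smul_ne_zero ha.ne_zero (leadingVec_ne_zero hy)
  exact ⟨a, ha.ne_zero, vecDegree_eq_of_coeff_ne_zero hle hne,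
    (leadingVec_eq_of_coeff_ne_zero hle hne).trans hcoeff⟩

theorem natDegree_symmProd_le_and_coeff_symmProd (x y : Fin 2 → k[X]) (i : Fin 3) :
    (symmProd x y i).natDegree ≤ vecDegree x + vecDegree y ∧
      (symmProd x y i).coeff (vecDegree x + vecDegree y) =
        symmProd (leadingVec x) (leadingVec y) i := by
  have hdeg (i j : Fin 2) : (x i * y j).natDegree ≤ vecDegree x + vecDegree y :=
    natDegree_mul_le_of_le (natDegree_le_vecDegree x i) (natDegree_le_vecDegree y j)
  have hcoeff (i j : Fin 2) :
      (x i * y j).coeff (vecDegree x + vecDegree y) = leadingVec x i * leadingVec y j :=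
    coeff_mul_add_eq_of_natDegree_le (natDegree_le_vecDegree x i) (natDegree_le_vecDegree y j)
  fin_cases i
  · exact ⟨hdeg 0 0, hcoeff 0 0⟩
  · exact ⟨natDegree_add_le_of_degree_le (hdeg 0 1) (hdeg 1 0),
      (coeff_add _ _ _).trans (congrArg₂ _ (hcoeff 0 1) (hcoeff 1 0))⟩
  · exact ⟨hdeg 1 1, hcoeff 1 1⟩

theorem vecDegree_symmProd {x y : Fin 2 → k[X]} (hx : x ≠ 0) (hy : y ≠ 0) :
    vecDegree (symmProd x y) = vecDegree x + vecDegree y ∧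
      leadingVec (symmProd x y) = symmProd (leadingVec x) (leadingVec y) := by
  have h := natDegree_symmProd_le_and_coeff_symmProd x y
  have hcoeff := funext fun i => (h i).2
  have hne := hcoeff ▸ symmProd_ne_zero (leadingVec_ne_zero hx) (leadingVec_ne_zero hy)
  exact ⟨vecDegree_eq_of_coeff_ne_zero (fun i => (h i).1) hne,
    (leadingVec_eq_of_coeff_ne_zero (fun i => (h i).1) hne).trans hcoeff⟩

end VecDegree

section AddSub

/-- The image under `WeierstrassCurve.addSubMap` of a vector over an algebra; it takes
`(x(P) x(Q) : x(P) + x(Q) : 1)` to `(x(P + Q) x(P - Q) : x(P + Q) + x(P - Q) : 1)`. -/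
noncomputable def addSubVec {R S : Type*} [CommRing R] [CommRing S] [Algebra R S]
    (W : WeierstrassCurve R) (x : Fin 3 → S) : Fin 3 → S :=
  fun i => MvPolynomial.aeval x (W.addSubMap i)

theorem addSubVec_map {R S : Type*} [CommRing R] [CommRing S] [Algebra R S]
    (W : WeierstrassCurve R) (x : Fin 3 → S) :
    addSubVec (W.map (algebraMap R S)) x = addSubVec W x := by
  ext i
  fin_cases i <;> simp [addSubVec, WeierstrassCurve.addSubMap, map_ofNat (algebraMap R S)]

theorem addSubVec_self {R : Type*} [CommRing R] (W : WeierstrassCurve R) (x : Fin 3 → R) :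
    addSubVec W x = fun i => MvPolynomial.eval x (W.addSubMap i) := rfl

theorem IsPrimitiveVec.addSubVec {R S : Type*} [CommRing R] [CommRing S] [Algebra R S]
    (W : WeierstrassCurve R) [W.IsElliptic] {x : Fin 3 → S} (hx : IsPrimitiveVec x) :
    IsPrimitiveVec (addSubVec W x) := by
  rw [IsPrimitiveVec, ← top_le_iff, ← Ideal.span_pow_eq_top _ hx 4, Ideal.span_le,
    ← addSubVec_map, addSubVec_self]
  rintro _ ⟨_, ⟨i, rfl⟩, rfl⟩
  change x i ^ 4 ∈ _
  rw [← WeierstrassCurve.addSubMapCoeff_condition (W.map (algebraMap R S)) x i]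
  exact Ideal.sum_mem _ fun j _ => Ideal.mul_mem_left _ _ (Ideal.subset_span ⟨j, rfl⟩)

theorem vecDegree_addSubVec {k : Type*} [Field k] (W : WeierstrassCurve k) [W.IsElliptic]
    {x : Fin 3 → k[X]} (hx : x ≠ 0) : vecDegree (addSubVec W x) = 2 * vecDegree x ∧
      leadingVec (addSubVec W x) = addSubVec W (leadingVec x) := by
  have h (i : Fin 3) := natDegree_aeval_le_and_coeff_aeval (W.isHomogeneous_addSubMap i)
    (natDegree_le_vecDegree x)
  have hcoeff : (fun i => (addSubVec W x i).coeff (2 * vecDegree x)) =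
      addSubVec W (leadingVec x) := funext fun i => (h i).2
  have hne : addSubVec W (leadingVec x) ≠ 0 := W.addSubMap_ne_zero (leadingVec_ne_zero hx)
  rw [← hcoeff] at hne
  exact ⟨vecDegree_eq_of_coeff_ne_zero (fun i => (h i).1) hne,
    (leadingVec_eq_of_coeff_ne_zero (fun i => (h i).1) hne).trans hcoeff⟩

theorem vecDegree_add_of_addSubVec_symmProd {k K : Type*} [Field k] [Field K] [Algebra k[X] K]
    [FaithfulSMul k[X] K] (W : WeierstrassCurve k) [W.IsElliptic] {x y z w : Fin 2 → k[X]}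
    (hx : IsPrimitiveVec x) (hy : IsPrimitiveVec y) (hz : IsPrimitiveVec z)
    (hw : IsPrimitiveVec w) {κ : K}
    (h : ∀ i, algebraMap k[X] K (addSubVec W (symmProd x y) i) =
      κ * algebraMap k[X] K (symmProd z w i)) :
    vecDegree z + vecDegree w = 2 * (vecDegree x + vecDegree y) ∧ ∃ a : k, a ≠ 0 ∧
      addSubVec W (symmProd (leadingVec x) (leadingVec y)) =
        a • symmProd (leadingVec z) (leadingVec w) := by
  have hxy := hx.symmProd hy
  obtain ⟨u, hu⟩ := (hxy.addSubVec W).exists_units_smul_eq (hz.symmProd hw) h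
  obtain ⟨a, ha, hdeg, hlead⟩ := exists_smul_of_units_smul hu (hz.symmProd hw).ne_zero
  rw [(vecDegree_addSubVec W hxy.ne_zero).1, (vecDegree_symmProd hx.ne_zero hy.ne_zero).1,
    (vecDegree_symmProd hz.ne_zero hw.ne_zero).1] at hdeg
  rw [(vecDegree_addSubVec W hxy.ne_zero).2, (vecDegree_symmProd hx.ne_zero hy.ne_zero).2,
    (vecDegree_symmProd hz.ne_zero hw.ne_zero).2] at hlead
  exact ⟨hdeg.symm, a, ha, hlead⟩

end AddSub

/-! ### The degree of a point over the rational function field -/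

section ShortCurve

open WeierstrassCurve

/-- The curve `y² = x³ + a x + b`. -/
def shortCurve {R : Type*} (a b : R) [Zero R] : WeierstrassCurve.Affine R := ⟨0, 0, 0, a, b⟩

theorem addSubVec_shortCurve {R S : Type*} [CommRing R] [CommRing S] [Algebra R S] (a b : R)
    (x : Fin 3 → S) : addSubVec (shortCurve a b) x =
      ![x 0 ^ 2 - 2 * algebraMap R S a * x 0 * x 2 - 4 * algebraMap R S b * x 1 * x 2 +
          algebraMap R S a ^ 2 * x 2 ^ 2,
        2 * x 0 * x 1 + 2 * algebraMap R S a * x 1 * x 2 + 4 * algebraMap R S b * x 2 ^ 2,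
        x 1 ^ 2 - 4 * x 0 * x 2] := by
  ext i
  fin_cases i <;>
    simp [addSubVec, addSubMap, shortCurve, b₂, b₄, b₆, b₈, map_ofNat (algebraMap R S)]
  all_goals ring

theorem isElliptic_shortCurve {F : Type*} [Field F] {a b : F} (h₂ : (2 : F) ≠ 0)
    (h : 4 * a ^ 3 + 27 * b ^ 2 ≠ 0) : (shortCurve a b).IsElliptic := by
  rw [isElliptic_iff, isUnit_iff_ne_zero]
  have hΔ : (shortCurve a b).Δ = -2 ^ 4 * (4 * a ^ 3 + 27 * b ^ 2) := by
    simp only [Δ, b₂, b₄, b₆, b₈, shortCurve]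
    ring
  rw [hΔ]
  exact mul_ne_zero (neg_ne_zero.2 (pow_ne_zero 4 h₂)) h

variable {F : Type*} [Field F] {a b : F}

theorem shortCurve_equation_iff {x y : F} :
    (shortCurve a b).Equation x y ↔ y ^ 2 = x ^ 3 + a * x + b := by
  simp [Affine.equation_iff, shortCurve]

theorem shortCurve_nonsingular_of_ne_zero {x y : F} (h₂ : (2 : F) ≠ 0) (hy : y ≠ 0)
    (h : y ^ 2 = x ^ 3 + a * x + b) : (shortCurve a b).Nonsingular x y := by
  refine (Affine.nonsingular_iff' ..).2 ⟨shortCurve_equation_iff.2 h, Or.inr ?_⟩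
  simpa [shortCurve] using mul_ne_zero h₂ hy

theorem shortCurve_negY (x y : F) : (shortCurve a b).negY x y = -y := by
  simp [Affine.negY, shortCurve]

theorem shortCurve_neg_some {x y : F} (h : (shortCurve a b).Nonsingular x y) :
    ∃ h', -Affine.Point.some x y h = Affine.Point.some x (-y) h' := by
  simp only [Affine.Point.neg_some, shortCurve_negY]
  have hneg := (Affine.nonsingular_neg ..).2 h
  rw [shortCurve_negY] at hneg
  exact ⟨hneg, trivial⟩

variable [DecidableEq F]

theorem shortCurve_slope {x₁ y₁ x₂ y₂ : F} (h₁ : y₁ ^ 2 = x₁ ^ 3 + a * x₁ + b)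
    (h₂ : y₂ ^ 2 = x₂ ^ 3 + a * x₂ + b) (h : ¬(x₁ = x₂ ∧ y₁ = -y₂)) :
    (shortCurve a b).slope x₁ x₂ y₁ y₂ * (x₁ - x₂) = y₁ - y₂ ∧
      (shortCurve a b).slope x₁ x₂ y₁ y₂ * (y₁ + y₂) = x₁ ^ 2 + x₁ * x₂ + x₂ ^ 2 + a := by
  by_cases hx : x₁ = x₂
  · subst hx
    have hy : y₁ + y₂ ≠ 0 := fun hy => h ⟨rfl, eq_neg_of_add_eq_zero_left hy⟩
    have hyy : y₁ = y₂ := sub_eq_zero.1 <| (mul_eq_zero.1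
      (show (y₁ + y₂) * (y₁ - y₂) = 0 by linear_combination h₁ - h₂)).resolve_left hy
    subst hyy
    have hne : y₁ ≠ (shortCurve a b).negY x₁ y₁ := by
      rw [shortCurve_negY]
      exact fun hy' => h ⟨rfl, hy'⟩
    rw [Affine.slope_of_Y_ne rfl hne, shortCurve_negY, sub_neg_eq_add, div_mul_cancel₀ _ hy]
    simp only [shortCurve]
    exact ⟨by ring, by ring⟩
  · rw [Affine.slope_of_X_ne hx]
    have hx' := sub_ne_zero.2 hx
    refine ⟨div_mul_cancel₀ _ hx', mul_left_cancel₀ hx' ?_⟩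
    rw [← mul_assoc, mul_div_cancel₀ _ hx']
    linear_combination h₁ - h₂

theorem exists_slope_of_add_some {x₁ y₁ x₂ y₂ : F} (h₁ : (shortCurve a b).Nonsingular x₁ y₁)
    (h₂ : (shortCurve a b).Nonsingular x₂ y₂) (h : ¬(x₁ = x₂ ∧ y₁ = -y₂)) :
    ∃ l x₃ y₃ : F, ∃ h₃, Affine.Point.some x₁ y₁ h₁ + Affine.Point.some x₂ y₂ h₂ =
        Affine.Point.some x₃ y₃ h₃ ∧
      l * (x₁ - x₂) = y₁ - y₂ ∧ l * (y₁ + y₂) = x₁ ^ 2 + x₁ * x₂ + x₂ ^ 2 + a ∧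
      x₃ = l ^ 2 - x₁ - x₂ ∧ y₃ = l * (x₁ - x₃) - y₁ := by
  obtain ⟨hl₁, hl₂⟩ := shortCurve_slope (shortCurve_equation_iff.1 h₁.1)
    (shortCurve_equation_iff.1 h₂.1) h
  rw [← shortCurve_negY (a := a) (b := b) x₂] at h
  refine ⟨_, _, _, _, Affine.Point.add_some h, hl₁, hl₂, ?_, ?_⟩
  · simp only [Affine.addX, shortCurve]
    ring
  · rw [Affine.addY, shortCurve_negY, Affine.negAddY]
    ring

theorem exists_addSubVec_eq_smul_self (P : (shortCurve a b).Point) :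
    ∃ κ : F, addSubVec (shortCurve a b) (symmProd P.xRep P.xRep) =
      κ • symmProd (P + P).xRep (P - P).xRep := by
  rw [sub_self, Affine.Point.xRep_zero, addSubVec_shortCurve]
  rcases P with _ | ⟨x, y, h⟩
  · refine ⟨1, ?_⟩
    rw [← Affine.Point.zero_def, add_zero, Affine.Point.xRep_zero]
    simp [symmProd]
  have hxy := shortCurve_equation_iff.1 h.1
  by_cases hy : y = -y
  · refine ⟨x ^ 4 - 2 * a * x ^ 2 - 8 * b * x + a ^ 2, ?_⟩
    rw [Affine.Point.add_self_of_Y_eq (by rwa [shortCurve_negY])]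
    simp only [symmProd, Affine.Point.xRep_some, Affine.Point.xRep_zero, Matrix.smul_vec3,
      smul_eq_mul, Matrix.cons_val, Algebra.algebraMap_self_apply]
    refine Matrix.vec3_eq ?_ ?_ ?_
    · ring
    · linear_combination -4 * hxy + 2 * y * hy
    · ring
  · obtain ⟨l, x₃, y₃, h₃, hadd, -, hl, hx₃, -⟩ :=
      exists_slope_of_add_some h h fun hyy => hy hyy.2
    refine ⟨4 * y ^ 2, ?_⟩
    rw [hadd]
    simp only [symmProd, Affine.Point.xRep_some, Matrix.smul_vec3,
      smul_eq_mul, Matrix.cons_val, Algebra.algebraMap_self_apply]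
    refine Matrix.vec3_eq ?_ ?_ ?_
    · rw [hx₃]
      linear_combination 8 * x * hxy - (2 * y * l + 3 * x ^ 2 + a) * hl
    · linear_combination -4 * hxy
    · ring

theorem exists_addSubVec_eq_smul_of_ne {x₁ y₁ x₂ y₂ : F}
    (h₁ : (shortCurve a b).Nonsingular x₁ y₁) (h₂ : (shortCurve a b).Nonsingular x₂ y₂)
    (hx : x₁ ≠ x₂) {P Q : (shortCurve a b).Point} (hP : P = .some x₁ y₁ h₁)
    (hQ : Q = .some x₂ y₂ h₂) :
    ∃ κ : F, addSubVec (shortCurve a b) (symmProd P.xRep Q.xRep) =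
      κ • symmProd (P + Q).xRep (P - Q).xRep := by
  obtain ⟨h₂', hneg⟩ := shortCurve_neg_some h₂
  obtain ⟨l, x₃, y₃, h₃, hadd, hl, -, hx₃, -⟩ :=
    exists_slope_of_add_some h₁ h₂ fun h => hx h.1
  obtain ⟨m, x₄, y₄, h₄, hsub, hm, -, hx₄, -⟩ :=
    exists_slope_of_add_some h₁ h₂' fun h => hx h.1
  have hxy₁ := shortCurve_equation_iff.1 h₁.1
  have hxy₂ := shortCurve_equation_iff.1 h₂.1
  have hx₃' : (x₁ - x₂) ^ 2 * x₃ = (y₁ - y₂) ^ 2 - (x₁ + x₂) * (x₁ - x₂) ^ 2 := by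
    rw [hx₃, ← hl]
    ring
  have hx₄' : (x₁ - x₂) ^ 2 * x₄ = (y₁ + y₂) ^ 2 - (x₁ + x₂) * (x₁ - x₂) ^ 2 := by
    rw [hx₄, ← sub_neg_eq_add, ← hm]
    ring
  rw [sub_eq_add_neg, hQ, hneg, hP, hadd, hsub, addSubVec_shortCurve]
  refine ⟨(x₁ - x₂) ^ 2, ?_⟩
  simp only [symmProd, Affine.Point.xRep_some, Matrix.smul_vec3,
    smul_eq_mul, Matrix.cons_val, Algebra.algebraMap_self_apply]
  refine Matrix.vec3_eq ?_ ?_ ?_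
  · refine mul_left_cancel₀ (pow_ne_zero 2 (sub_ne_zero.2 hx)) ?_
    calc _ = (x₁ ^ 3 + a * x₁ + b - (x₂ ^ 3 + a * x₂ + b)) ^ 2 -
          2 * (x₁ + x₂) * (x₁ - x₂) ^ 2 * (x₁ ^ 3 + a * x₁ + b + (x₂ ^ 3 + a * x₂ + b)) +
          ((x₁ + x₂) * (x₁ - x₂) ^ 2) ^ 2 := by ring
      _ = (x₁ - x₂) ^ 2 * x₃ * ((x₁ - x₂) ^ 2 * x₄) := by
        rw [hx₃', hx₄', ← hxy₁, ← hxy₂]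
        ring
      _ = _ := by ring
  · linear_combination -2 * hxy₁ - 2 * hxy₂ - hx₃' - hx₄'
  · ring

theorem exists_addSubVec_eq_smul (P Q : (shortCurve a b).Point) :
    ∃ κ : F, addSubVec (shortCurve a b) (symmProd P.xRep Q.xRep) =
      κ • symmProd (P + Q).xRep (P - Q).xRep := by
  have hcomm (x y : Fin 2 → F) : symmProd x y = symmProd y x := by
    simp only [symmProd, mul_comm, add_comm]
  rcases eq_or_ne P Q with rfl | hPQ
  · exact exists_addSubVec_eq_smul_self P
  rcases eq_or_ne P (-Q) with rfl | hPQ'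
  · obtain ⟨κ, hκ⟩ := exists_addSubVec_eq_smul_self Q
    refine ⟨κ, ?_⟩
    rw [Affine.Point.xRep_neg, hκ, hcomm, neg_add_cancel, sub_self, ← neg_add',
      Affine.Point.xRep_neg]
  match P, Q, hPQ, hPQ' with
  | 0, Q, _, _ =>
    refine ⟨1, ?_⟩
    rw [zero_add, zero_sub, Affine.Point.xRep_neg, addSubVec_shortCurve]
    simp only [symmProd, Affine.Point.xRep_zero, Matrix.smul_vec3,
      smul_eq_mul, Matrix.cons_val, Algebra.algebraMap_self_apply]
    refine Matrix.vec3_eq ?_ ?_ ?_ <;> ring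
  | P, 0, _, _ =>
    refine ⟨1, ?_⟩
    rw [add_zero, sub_zero, addSubVec_shortCurve]
    simp only [symmProd, Affine.Point.xRep_zero, Matrix.smul_vec3,
      smul_eq_mul, Matrix.cons_val, Algebra.algebraMap_self_apply]
    refine Matrix.vec3_eq ?_ ?_ ?_ <;> ring
  | .some x₁ y₁ h₁, .some x₂ y₂ h₂, hPQ, hPQ' =>
    refine exists_addSubVec_eq_smul_of_ne h₁ h₂ (fun hx => ?_) rfl rfl
    exact (Affine.Point.X_eq_iff.1 hx).elim hPQ hPQ'

end ShortCurve

section Parallelogram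

variable {G : Type*} [AddCommGroup G] {d : G → ℤ}

theorem map_zero_of_parallelogram (hd : ∀ P Q, d (P + Q) + d (P - Q) = 2 * (d P + d Q)) :
    d 0 = 0 := by
  have h := hd 0 0
  simp only [add_zero, sub_zero] at h
  linarith

theorem map_neg_of_parallelogram (hd : ∀ P Q, d (P + Q) + d (P - Q) = 2 * (d P + d Q)) (P : G) :
    d (-P) = d P := by
  have h := hd 0 P
  simp only [zero_add, zero_sub, map_zero_of_parallelogram hd] at h
  linarith

theorem map_nsmul_add_of_parallelogram
    (hd : ∀ P Q, d (P + Q) + d (P - Q) = 2 * (d P + d Q)) (P Q : G) (n : ℕ) :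
    d (n • P + Q) = n ^ 2 * d P + n * (d (P + Q) - d P - d Q) + d Q := by
  induction n using Nat.twoStepInduction with
  | zero => simp
  | one =>
    rw [one_smul]
    push_cast
    ring
  | more n ih₀ ih₁ =>
    have h := hd ((n + 1) • P + Q) P
    rw [show (n + 1) • P + Q + P = (n + 2) • P + Q by
        simp only [add_nsmul, two_nsmul, one_nsmul]; abel,
      show (n + 1) • P + Q - P = n • P + Q by rw [succ_nsmul]; abel, ih₀, ih₁] at h
    push_cast at h ⊢
    linear_combination h

theorem map_zsmul_add_of_parallelogram
    (hd : ∀ P Q, d (P + Q) + d (P - Q) = 2 * (d P + d Q)) (P Q : G) (n : ℤ) :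
    d (n • P + Q) = n ^ 2 * d P + n * (d (P + Q) - d P - d Q) + d Q := by
  obtain ⟨n, rfl | rfl⟩ := n.eq_nat_or_neg
  · rw [natCast_zsmul]
    exact_mod_cast map_nsmul_add_of_parallelogram hd P Q n
  · have hPQ := hd P Q
    rw [← map_neg_of_parallelogram hd (P - Q), neg_sub, sub_eq_neg_add] at hPQ
    rw [neg_smul, natCast_zsmul, ← smul_neg, map_nsmul_add_of_parallelogram hd,
      map_neg_of_parallelogram hd]
    linear_combination n * hPQ

theorem map_zsmul_add_zsmul_of_parallelogram
    (hd : ∀ P Q, d (P + Q) + d (P - Q) = 2 * (d P + d Q)) (P Q : G) (m n : ℤ) :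
    d (m • P + n • Q) = m ^ 2 * d P + m * n * (d (P + Q) - d P - d Q) + n ^ 2 * d Q := by
  have h := map_zsmul_add_of_parallelogram hd Q 0 n
  rw [add_zero, add_zero, map_zero_of_parallelogram hd] at h
  rw [map_zsmul_add_of_parallelogram hd, add_comm P, map_zsmul_add_of_parallelogram hd, h,
    add_comm Q]
  ring

end Parallelogram

section TwistCoord

open WeierstrassCurve

variable {k : Type*} [Field k]

/-- The quadratic twist `y² = x³ + A f² x + B f³` by a polynomial `f` of the constant curve
`y² = x³ + A x + B`, over the field of rational functions. -/
noncomputable abbrev twistCurve (A B : k) (f : k[X]) : Affine (RatFunc k) :=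
  shortCurve (algebraMap k[X] (RatFunc k) (C A * f ^ 2)) (algebraMap k[X] (RatFunc k) (C B * f ^ 3))

variable {A B : k} {f : k[X]}

/-- Coprime homogeneous coordinates `![u, v]` of the rational function `x(P) / f` attached to a
point `P` of `twistCurve A B f`. -/
noncomputable def twistCoord : (twistCurve A B f).Point → Fin 2 → k[X]
  | .zero => ![1, 0]
  | .some x _ _ => ![(x / algebraMap k[X] (RatFunc k) f).num,
      (x / algebraMap k[X] (RatFunc k) f).denom]

/-- The degree of the rational function `x(P) / f`. -/
noncomputable def twistDegree (P : (twistCurve A B f).Point) : ℕ := vecDegree (twistCoord P)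

theorem isCoprime_twistCoord (P : (twistCurve A B f).Point) :
    IsCoprime (twistCoord P 0) (twistCoord P 1) := by
  rcases P with _ | _
  · exact isCoprime_one_left
  · exact RatFunc.isCoprime_num_denom _

theorem isPrimitiveVec_twistCoord (P : (twistCurve A B f).Point) :
    IsPrimitiveVec (twistCoord P) :=
  isPrimitiveVec_fin_two.2 (isCoprime_twistCoord P)

theorem twistCoord_neg (P : (twistCurve A B f).Point) : twistCoord (-P) = twistCoord P := by
  rcases P with _ | ⟨x, y, h⟩ <;> rfl

theorem mul_twistCoord_one (hf : f ≠ 0) {x y : RatFunc k} (h : (twistCurve A B f).Nonsingular x y) :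
    x * algebraMap k[X] (RatFunc k) (twistCoord (.some x y h) 1) =
      algebraMap k[X] (RatFunc k) (f * twistCoord (.some x y h) 0) := by
  set q := x / algebraMap k[X] (RatFunc k) f with hq
  have hx : x = algebraMap k[X] (RatFunc k) f * q := by
    rw [hq, mul_div_cancel₀ _ (RatFunc.algebraMap_ne_zero hf)]
  change x * algebraMap _ _ q.denom = algebraMap _ _ (f * q.num)
  rw [map_mul, hx, mul_assoc, ← (div_eq_iff (RatFunc.algebraMap_ne_zero q.denom_ne_zero)).1
    q.num_div_denom]

theorem exists_xRep_eq_smul_twistCoord (hf : f ≠ 0) (P : (twistCurve A B f).Point) :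
    ∃ l : RatFunc k, l ≠ 0 ∧ P.xRep = l • ![algebraMap k[X] (RatFunc k) (f * twistCoord P 0),
      algebraMap k[X] (RatFunc k) (twistCoord P 1)] := by
  rcases P with _ | ⟨x, y, h⟩
  · have hf' : algebraMap k[X] (RatFunc k) f ≠ 0 := RatFunc.algebraMap_ne_zero hf
    refine ⟨(algebraMap k[X] (RatFunc k) f)⁻¹, inv_ne_zero hf', ?_⟩
    rw [← Affine.Point.zero_def, Affine.Point.xRep_zero]
    simp [twistCoord, hf']
  · have hv : algebraMap k[X] (RatFunc k) (twistCoord (.some x y h) 1) ≠ 0 :=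
      RatFunc.algebraMap_ne_zero (RatFunc.denom_ne_zero _)
    refine ⟨(algebraMap k[X] (RatFunc k) (twistCoord (.some x y h) 1))⁻¹, inv_ne_zero hv, ?_⟩
    rw [Affine.Point.xRep_some, Matrix.smul_vec2, ← mul_twistCoord_one hf, smul_eq_mul,
      smul_eq_mul, inv_mul_cancel₀ hv, mul_left_comm, inv_mul_cancel₀ hv, mul_one]

theorem exists_twistDegree_eq_and_leadingVec_eq (hf : f ≠ 0) {x y : RatFunc k}
    (h : (twistCurve A B f).Nonsingular x y) {u v : k[X]} (huv : IsCoprime u v)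
    (hx : x * algebraMap k[X] (RatFunc k) v = algebraMap k[X] (RatFunc k) (f * u)) :
    ∃ a : k, a ≠ 0 ∧ twistDegree (.some x y h) = vecDegree ![u, v] ∧
      leadingVec (twistCoord (.some x y h)) = a • leadingVec ![u, v] := by
  have huv' : IsPrimitiveVec ![u, v] := isPrimitiveVec_fin_two.2 huv
  have hf' : algebraMap k[X] (RatFunc k) f ≠ 0 := RatFunc.algebraMap_ne_zero hf
  have hv : algebraMap k[X] (RatFunc k) v ≠ 0 := by
    intro hv
    rw [hv, mul_zero, map_mul, zero_eq_mul, or_iff_right hf'] at hx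
    have hinj := RatFunc.algebraMap_injective k
    rw [(map_eq_zero_iff _ hinj).1 hv, (map_eq_zero_iff _ hinj).1 hx] at huv
    exact not_isCoprime_zero_zero huv
  obtain ⟨ε, hε⟩ := (isPrimitiveVec_twistCoord (.some x y h)).exists_units_smul_eq huv'
    (K := RatFunc k) (κ := algebraMap k[X] (RatFunc k) (twistCoord (.some x y h) 1) /
      algebraMap k[X] (RatFunc k) v) fun i => by
    have hP := mul_twistCoord_one hf h
    rw [div_mul_eq_mul_div, eq_div_iff hv]
    rw [map_mul] at hx hP
    fin_cases i
    · refine mul_left_cancel₀ hf' ?_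
      simp only [Fin.zero_eta, Matrix.cons_val]
      linear_combination algebraMap k[X] (RatFunc k) (twistCoord (.some x y h) 1) * hx -
        algebraMap k[X] (RatFunc k) v * hP
    · rfl
  exact exists_smul_of_units_smul hε huv'.ne_zero

open Classical in
theorem exists_addSubVec_twistCoord (hf : f ≠ 0) (P Q : (twistCurve A B f).Point) :
    ∃ κ : RatFunc k, ∀ i, algebraMap k[X] (RatFunc k)
        (addSubVec (shortCurve A B) (symmProd (twistCoord P) (twistCoord Q)) i) =
      κ * algebraMap k[X] (RatFunc k)
        (symmProd (twistCoord (P + Q)) (twistCoord (P - Q)) i) := by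
  obtain ⟨κ, hκ⟩ := exists_addSubVec_eq_smul P Q
  obtain ⟨l₁, hl₁, h₁⟩ := exists_xRep_eq_smul_twistCoord hf P
  obtain ⟨l₂, hl₂, h₂⟩ := exists_xRep_eq_smul_twistCoord hf Q
  obtain ⟨l₃, -, h₃⟩ := exists_xRep_eq_smul_twistCoord hf (P + Q)
  obtain ⟨l₄, -, h₄⟩ := exists_xRep_eq_smul_twistCoord hf (P - Q)
  have hf' : algebraMap k[X] (RatFunc k) f ≠ 0 := RatFunc.algebraMap_ne_zero hf
  refine ⟨κ * l₃ * l₄ / (l₁ * l₂ * algebraMap k[X] (RatFunc k) f) ^ 2, fun i => ?_⟩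
  have hi := congrFun hκ i
  rw [h₁, h₂, h₃, h₄, addSubVec_shortCurve] at hi
  rw [addSubVec_shortCurve, div_mul_eq_mul_div, eq_div_iff
    (pow_ne_zero 2 (mul_ne_zero (mul_ne_zero hl₁ hl₂) hf'))]
  refine mul_left_cancel₀ (pow_ne_zero (2 - i) hf') ?_
  fin_cases i <;>
    simp only [symmProd, Pi.smul_apply, smul_eq_mul, Fin.zero_eta, Fin.mk_one,
      Fin.reduceFinMk, Matrix.cons_val, map_mul, map_pow, map_add, map_sub, map_ofNat,
      Algebra.algebraMap_self_apply, Polynomial.algebraMap_eq] at hi ⊢ <;>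
    linear_combination hi

open Classical in
theorem twistDegree_add_add_twistDegree_sub (hf : f ≠ 0) [(shortCurve A B).IsElliptic]
    (P Q : (twistCurve A B f).Point) :
    twistDegree (P + Q) + twistDegree (P - Q) = 2 * (twistDegree P + twistDegree Q) ∧
      ∃ a : k, a ≠ 0 ∧ addSubVec (shortCurve A B)
          (symmProd (leadingVec (twistCoord P)) (leadingVec (twistCoord Q))) =
        a • symmProd (leadingVec (twistCoord (P + Q))) (leadingVec (twistCoord (P - Q))) := by
  obtain ⟨κ, hκ⟩ := exists_addSubVec_twistCoord hf P Q
  exact vecDegree_add_of_addSubVec_symmProd _ (isPrimitiveVec_twistCoord P)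
    (isPrimitiveVec_twistCoord Q) (isPrimitiveVec_twistCoord _) (isPrimitiveVec_twistCoord _) hκ

open Classical in
theorem twistDegree_zsmul_add_zsmul (hf : f ≠ 0) [(shortCurve A B).IsElliptic]
    (P Q : (twistCurve A B f).Point) (m n : ℤ) :
    (twistDegree (m • P + n • Q) : ℤ) = m ^ 2 * twistDegree P +
      m * n * (twistDegree (P + Q) - twistDegree P - twistDegree Q) + n ^ 2 * twistDegree Q :=
  map_zsmul_add_zsmul_of_parallelogram (d := fun P => (twistDegree P : ℤ))
    (fun P Q => mod_cast (twistDegree_add_add_twistDegree_sub hf P Q).1) P Q m n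

theorem leadingVec_twistCoord_ne_zero (P : (twistCurve A B f).Point) :
    leadingVec (twistCoord P) ≠ 0 :=
  leadingVec_ne_zero (isPrimitiveVec_twistCoord P).ne_zero

open Classical in
/-- The points `P` for which the rational function `x(P) / f` takes the value `∞` at `∞`. -/
noncomputable def poleSubgroup (A B : k) {f : k[X]} (hf : f ≠ 0) [(shortCurve A B).IsElliptic] :
    AddSubgroup (twistCurve A B f).Point where
  carrier := {P | leadingVec (twistCoord P) 1 = 0}
  zero_mem' := by
    change coeff (0 : k[X]) _ = 0
    exact coeff_zero _
  neg_mem' {P} hP := by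
    change leadingVec (twistCoord (-P)) 1 = 0
    rwa [twistCoord_neg]
  add_mem' {P Q} hP hQ := by
    change leadingVec (twistCoord P) 1 = 0 at hP
    change leadingVec (twistCoord Q) 1 = 0 at hQ
    change leadingVec (twistCoord (P + Q)) 1 = 0
    obtain ⟨a, ha, h⟩ := (twistDegree_add_add_twistDegree_sub hf P Q).2
    have h₁ := congrFun h 1
    have h₂ := congrFun h 2
    simp only [addSubVec_shortCurve, symmProd, hP, hQ, Pi.smul_apply, smul_eq_mul,
      Matrix.cons_val, mul_zero, zero_mul, add_zero, sub_zero, ne_eq, OfNat.ofNat_ne_zero,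
      not_false_eq_true, zero_pow, zero_eq_mul, ha, false_or] at h₁ h₂
    by_contra hz
    have hw₁ := (mul_eq_zero.1 h₂).resolve_left hz
    rw [hw₁, mul_zero, zero_add] at h₁
    have hw₀ := (mul_eq_zero.1 h₁).resolve_left hz
    refine leadingVec_twistCoord_ne_zero (P - Q) (funext fun i => ?_)
    fin_cases i
    exacts [hw₀, hw₁]

end TwistCoord

/-! ### The multiplier of a point on the invariant differential -/

section RatFuncDeriv

variable (k : Type*) [Field k]

/-- The homomorphism `u ↦ u + u' ε` to the dual numbers over the rational functions. -/
noncomputable def taylorHom : k[X] →ₐ[k] TrivSqZeroExt (RatFunc k) (RatFunc k) :=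
  aeval (.inl RatFunc.X + .inr 1)

theorem taylorHom_apply (u : k[X]) : taylorHom k u = .inl (algebraMap k[X] (RatFunc k) u) +
    .inr (algebraMap k[X] (RatFunc k) (derivative u)) := by
  have hinl (u : k[X]) : aeval (TrivSqZeroExt.inl (RatFunc.X : RatFunc k)) u =
      (.inl (algebraMap k[X] (RatFunc k) u) : TrivSqZeroExt (RatFunc k) (RatFunc k)) := by
    rw [← RatFunc.algebraMap_X, ← TrivSqZeroExt.inlAlgHom_apply k,
      ← TrivSqZeroExt.inlAlgHom_apply k, aeval_algHom_apply, aeval_algebraMap_apply,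
      aeval_X_left_apply]
  rw [taylorHom, aeval_add_of_sq_eq_zero _ _ _ (by simp [pow_two]), hinl, hinl,
    TrivSqZeroExt.inl_mul_inr, smul_eq_mul, mul_one]

theorem isUnit_taylorHom (u : nonZeroDivisors k[X]) : IsUnit (taylorHom k u) := by
  rw [TrivSqZeroExt.isUnit_iff_isUnit_fst]
  simp [taylorHom_apply]

/-- The extension of `taylorHom` to rational functions. -/
noncomputable def ratFuncTaylorHom : RatFunc k →ₐ[k] TrivSqZeroExt (RatFunc k) (RatFunc k) :=
  IsLocalization.liftAlgHom (isUnit_taylorHom k)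

theorem ratFuncTaylorHom_algebraMap (u : k[X]) :
    ratFuncTaylorHom k (algebraMap k[X] (RatFunc k) u) = taylorHom k u :=
  IsLocalization.lift_eq _ _

theorem fst_ratFuncTaylorHom (x : RatFunc k) : (ratFuncTaylorHom k x).fst = x := by
  have h : (TrivSqZeroExt.fstHom k (RatFunc k) (RatFunc k)).toRingHom.comp
      (ratFuncTaylorHom k).toRingHom = RingHom.id _ :=
    IsLocalization.ringHom_ext (nonZeroDivisors k[X]) <| RingHom.ext fun u => by
      simp [ratFuncTaylorHom_algebraMap, taylorHom_apply]
  exact congr($h x)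

/-- The derivation `d/dX` of the field of rational functions. -/
noncomputable def ratFuncDeriv : Derivation k (RatFunc k) (RatFunc k) :=
  Derivation.mk' (TrivSqZeroExt.sndHom (RatFunc k) (RatFunc k) ∘ₗ
    (ratFuncTaylorHom k).toLinearMap) fun x y => by
      simp [fst_ratFuncTaylorHom, mul_comm]

theorem ratFuncDeriv_algebraMap (u : k[X]) : ratFuncDeriv k (algebraMap k[X] (RatFunc k) u) =
    algebraMap k[X] (RatFunc k) (derivative u) := by
  change (ratFuncTaylorHom k _).snd = _
  rw [ratFuncTaylorHom_algebraMap, taylorHom_apply]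
  simp [← Algebra.algebraMap_eq_smul_one]

end RatFuncDeriv

section Multiplier

open WeierstrassCurve

variable {R F : Type*} [CommRing R] [Field F] [Algebra R F] (δ : Derivation R F F) (f : F) {a b : F}

/-- Over a function field with derivation `δ`, view a point `P = (x, y)` of the twist by `f` of a
constant curve as the map `φ = x / f` of the curve `f y² = x³ + A x + B` to itself. The equations
say that `φ` pulls back the invariant differential `dx / y` to `c` times itself; the second one
follows from the first when `y ≠ 0`. -/
def HasMultiplier (c : F) : (shortCurve a b).Point → Prop
  | .zero => c = 0
  | .some x y _ => f * δ x - δ f * x = c * y ∧ 2 * f * δ y - 3 * δ f * y = c * (3 * x ^ 2 + a)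

variable {δ f}

theorem HasMultiplier.neg {P : (shortCurve a b).Point} {c : F} (h : HasMultiplier δ f c P) :
    HasMultiplier δ f (-c) (-P) := by
  rcases P with _ | ⟨x, y, hP⟩
  · exact neg_eq_zero.2 h
  · obtain ⟨hneg, h'⟩ := shortCurve_neg_some hP
    rw [h']
    obtain ⟨hx, hy⟩ := h
    refine ⟨by rw [neg_mul_neg, hx], ?_⟩
    rw [map_neg]
    linear_combination -hy

theorem two_mul_deriv_slope (ha : f * δ a = 2 * δ f * a) {x₁ y₁ x₂ y₂ c₁ c₂ l : F}
    (hl₁ : l * (x₁ - x₂) = y₁ - y₂) (hl₂ : l * (y₁ + y₂) = x₁ ^ 2 + x₁ * x₂ + x₂ ^ 2 + a)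
    (hx₁ : f * δ x₁ - δ f * x₁ = c₁ * y₁)
    (hy₁ : 2 * f * δ y₁ - 3 * δ f * y₁ = c₁ * (3 * x₁ ^ 2 + a))
    (hx₂ : f * δ x₂ - δ f * x₂ = c₂ * y₂)
    (hy₂ : 2 * f * δ y₂ - 3 * δ f * y₂ = c₂ * (3 * x₂ ^ 2 + a))
    (h : ¬(x₁ = x₂ ∧ y₁ = -y₂)) :
    2 * f * δ l - δ f * l =
      c₁ * (2 * x₁ + x₂ - l ^ 2) + c₂ * (x₁ + 2 * x₂ - l ^ 2) := by
  have hδ₁ := congr(2 * f * δ $hl₁)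
  have hδ₂ := congr(2 * f * δ $hl₂)
  simp only [Derivation.leibniz, Derivation.leibniz_pow, map_sub, map_add, smul_eq_mul,
    nsmul_eq_mul, Nat.cast_ofNat, Nat.add_one_sub_one, pow_one] at hδ₁ hδ₂
  have hX : (2 * f * δ l - δ f * l) * (x₁ - x₂) =
      (c₁ * (2 * x₁ + x₂ - l ^ 2) + c₂ * (x₁ + 2 * x₂ - l ^ 2)) * (x₁ - x₂) := by
    linear_combination hδ₁ + hy₁ - hy₂ - 2 * l * (hx₁ - hx₂) - 3 * δ f * hl₁ +
      l * (c₁ + c₂) * hl₁ - (c₁ - c₂) * hl₂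
  have hY : (2 * f * δ l - δ f * l) * (y₁ + y₂) =
      (c₁ * (2 * x₁ + x₂ - l ^ 2) + c₂ * (x₁ + 2 * x₂ - l ^ 2)) * (y₁ + y₂) := by
    linear_combination hδ₂ - l * (hy₁ + hy₂) + 2 * (2 * x₁ + x₂) * hx₁ + 2 * (x₁ + 2 * x₂) * hx₂ +
      2 * ha - 4 * δ f * hl₂ + (c₁ + c₂) * l * hl₂ + (c₂ * (x₁ + 2 * x₂) - c₁ * (2 * x₁ + x₂)) * hl₁
  by_cases hx : x₁ = x₂
  · have hy : y₁ + y₂ ≠ 0 := fun hy => h ⟨hx, eq_neg_of_add_eq_zero_left hy⟩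
    exact mul_right_cancel₀ hy hY
  · exact mul_right_cancel₀ (sub_ne_zero.2 hx) hX

theorem HasMultiplier.some_of_ne_zero (ha : f * δ a = 2 * δ f * a) (hb : f * δ b = 3 * δ f * b)
    {x y c : F} (hy : y ≠ 0) (h : (shortCurve a b).Nonsingular x y)
    (hx : f * δ x - δ f * x = c * y) : HasMultiplier δ f c (.some x y h) := by
  refine ⟨hx, mul_right_cancel₀ hy ?_⟩
  have heq := shortCurve_equation_iff.1 h.1
  have hδ := congr(f * δ $heq)
  simp only [Derivation.leibniz, Derivation.leibniz_pow, map_add, smul_eq_mul, nsmul_eq_mul,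
    Nat.cast_ofNat, Nat.add_one_sub_one, pow_one] at hδ
  linear_combination hδ + (3 * x ^ 2 + a) * hx + x * ha + hb - 3 * δ f * heq

theorem HasMultiplier.add_eq_zero {x y c₁ c₂ : F} {h : (shortCurve a b).Nonsingular x y}
    {h' : (shortCurve a b).Nonsingular x (-y)} (h₁ : HasMultiplier δ f c₁ (.some x y h))
    (h₂ : HasMultiplier δ f c₂ (.some x (-y) h')) : c₁ + c₂ = 0 := by
  obtain ⟨hx₁, hy₁⟩ := h₁
  obtain ⟨hx₂, hy₂⟩ := h₂
  rw [map_neg] at hy₂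
  rcases ((Affine.nonsingular_iff ..).1 h).2 with hne | hne
  · have h0 : 3 * x ^ 2 + a ≠ 0 := by
      simpa [shortCurve, ne_comm] using hne
    refine mul_right_cancel₀ h0 ?_
    linear_combination -hy₁ - hy₂
  · have h0 : y ≠ 0 := by
      rintro rfl
      simp [shortCurve] at hne
    refine mul_right_cancel₀ h0 ?_
    linear_combination hx₂ - hx₁

open Classical in
theorem HasMultiplier.add (ha : f * δ a = 2 * δ f * a) {P Q : (shortCurve a b).Point} {c₁ c₂ : F}
    (hP : HasMultiplier δ f c₁ P) (hQ : HasMultiplier δ f c₂ Q) :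
    HasMultiplier δ f (c₁ + c₂) (P + Q) := by
  rcases P with _ | ⟨x₁, y₁, h₁⟩
  · rw [← Affine.Point.zero_def, zero_add, show c₁ = 0 from hP, zero_add]
    exact hQ
  rcases Q with _ | ⟨x₂, y₂, h₂⟩
  · rw [← Affine.Point.zero_def, add_zero, show c₂ = 0 from hQ, add_zero]
    exact hP
  by_cases h : x₁ = x₂ ∧ y₁ = -y₂
  · obtain ⟨rfl, rfl⟩ := h
    rw [add_comm c₁, hQ.add_eq_zero hP, Affine.Point.add_of_Y_eq rfl (shortCurve_negY ..).symm]
    rfl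
  obtain ⟨l, x₃, y₃, h₃, hadd, hl₁, hl₂, hx₃, hy₃⟩ := exists_slope_of_add_some h₁ h₂ h
  obtain ⟨hδx₁, hδy₁⟩ := hP
  obtain ⟨hδx₂, hδy₂⟩ := hQ
  have hδl := two_mul_deriv_slope ha hl₁ hl₂ hδx₁ hδy₁ hδx₂ hδy₂ h
  have hδx₃ := congr(f * δ $hx₃)
  have hδy₃ := congr(2 * f * δ $hy₃)
  simp only [Derivation.leibniz, Derivation.leibniz_pow, map_sub, smul_eq_mul, nsmul_eq_mul,
    Nat.cast_ofNat, Nat.add_one_sub_one, pow_one] at hδx₃ hδy₃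
  have hx : f * δ x₃ - δ f * x₃ = (c₁ + c₂) * y₃ := by
    linear_combination hδx₃ + l * hδl - hδx₁ - hδx₂ - δ f * hx₃ - (c₁ + c₂) * hy₃ - c₂ * hl₁ +
      l * (c₁ + c₂) * hx₃
  rw [hadd]
  refine ⟨hx, ?_⟩
  have htangent₁ : 3 * x₁ ^ 2 + a - 2 * l * y₁ = (x₁ - x₂) * (x₁ - x₃) := by
    linear_combination -hl₂ + l * hl₁ + (x₁ - x₂) * hx₃
  have htangent₃ : 3 * x₃ ^ 2 + a + 2 * l * y₃ = (x₃ - x₁) * (x₃ - x₂) := by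
    linear_combination htangent₁ + 2 * l * hy₃ + 2 * (x₃ - x₁) * hx₃
  linear_combination hδy₃ + (x₁ - x₃) * hδl - 2 * l * hx + 2 * l * hδx₁ - hδy₁ -
    3 * δ f * hy₃ - c₁ * htangent₁ - (c₁ + c₂) * htangent₃ +
    (c₁ + c₂) * (x₁ - x₃) * hx₃

open Classical in
theorem HasMultiplier.zsmul_add_zsmul (ha : f * δ a = 2 * δ f * a)
    {P Q : (shortCurve a b).Point} {c₁ c₂ : F} (hP : HasMultiplier δ f c₁ P)
    (hQ : HasMultiplier δ f c₂ Q) (m n : ℤ) :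
    HasMultiplier δ f (m * c₁ + n * c₂) (m • P + n • Q) := by
  let graph : AddSubgroup ((shortCurve a b).Point × F) :=
    { carrier := {x | HasMultiplier δ f x.2 x.1}
      zero_mem' := rfl
      add_mem' := HasMultiplier.add ha
      neg_mem' := HasMultiplier.neg }
  have hP' : (P, c₁) ∈ graph := hP
  have hQ' : (Q, c₂) ∈ graph := hQ
  have h : HasMultiplier δ f (m • c₁ + n • c₂) (m • P + n • Q) :=
    add_mem (zsmul_mem hP' m) (zsmul_mem hQ' n)
  rwa [zsmul_eq_mul, zsmul_eq_mul] at h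

end Multiplier

section MultiplierZero

open WeierstrassCurve

variable {k : Type*} [Field k] {A B : k} {f : k[X]}

theorem derivative_twistCoord_of_hasMultiplier_zero (hf : f ≠ 0) {P : (twistCurve A B f).Point}
    (hP : HasMultiplier (ratFuncDeriv k) (algebraMap k[X] (RatFunc k) f) 0 P) (i : Fin 2) :
    derivative (twistCoord P i) = 0 := by
  suffices h : derivative (twistCoord P 0) = 0 ∧ derivative (twistCoord P 1) = 0 by
    fin_cases i
    exacts [h.1, h.2]
  rw [← (isCoprime_twistCoord P).wronskian_eq_zero_iff]
  rcases P with _ | ⟨x, y, h⟩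
  · simp [twistCoord, wronskian]
  have hx := mul_twistCoord_one hf h
  generalize twistCoord (.some x y h) 0 = u, twistCoord (.some x y h) 1 = v at hx ⊢
  have hδ := congr(ratFuncDeriv k $hx)
  simp only [Derivation.leibniz, ratFuncDeriv_algebraMap, map_mul, smul_eq_mul] at hx hδ
  have hδx := hP.1
  rw [ratFuncDeriv_algebraMap, zero_mul] at hδx
  refine RatFunc.algebraMap_injective k
    (mul_left_cancel₀ (pow_ne_zero 2 (RatFunc.algebraMap_ne_zero hf)) ?_)
  rw [wronskian, map_sub, map_mul, map_mul, map_zero]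
  set F := algebraMap k[X] (RatFunc k) f
  set U := algebraMap k[X] (RatFunc k) u
  set V := algebraMap k[X] (RatFunc k) v
  linear_combination F * V * hδ - V ^ 2 * hδx -
    (V * algebraMap k[X] (RatFunc k) (derivative f) +
      F * algebraMap k[X] (RatFunc k) (derivative v)) * hx

theorem dvd_twistDegree_of_hasMultiplier_zero (p : ℕ) [Fact p.Prime] [CharP k p] (hf : f ≠ 0)
    {P : (twistCurve A B f).Point}
    (hP : HasMultiplier (ratFuncDeriv k) (algebraMap k[X] (RatFunc k) f) 0 P) :
    p ∣ twistDegree P := by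
  have hexpand (i : Fin 2) : p ∣ (twistCoord P i).natDegree := by
    rw [← expand_contract p (derivative_twistCoord_of_hasMultiplier_zero hf hP i)
      (Fact.out : p.Prime).ne_zero, natDegree_expand]
    exact dvd_mul_left _ _
  obtain ⟨i, -, hi⟩ := exists_mem_eq_sup univ univ_nonempty fun i => (twistCoord P i).natDegree
  rw [twistDegree, vecDegree, hi]
  exact hexpand i

end MultiplierZero

/-! ### The isogeny of degree 6 -/

section ShortCubic

variable {k : Type*} [Field k]

/-- The right-hand side of the equation of `shortCurve A B`, as a polynomial. -/
noncomputable def shortCubic (A B : k) : k[X] := X ^ 3 + C A * X + C B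

theorem shortCubic_monic (A B : k) : (shortCubic A B).Monic := by
  rw [shortCubic]
  monicity!

theorem natDegree_shortCubic (A B : k) : (shortCubic A B).natDegree = 3 := by
  rw [shortCubic]
  compute_degree!

theorem shortCubic_separable {A B : k} (h : 4 * A ^ 3 + 27 * B ^ 2 ≠ 0) :
    (shortCubic A B).Separable := by
  have hderiv : derivative (shortCubic A B) = 3 * X ^ 2 + C A := by
    rw [shortCubic, derivative_add, derivative_add, derivative_X_pow, derivative_C_mul,
      derivative_X, derivative_C, mul_one, add_zero, ← C_ofNat]
    norm_cast
  have hinv : (C (4 * A ^ 3 + 27 * B ^ 2)⁻¹ : k[X]) * (4 * C A ^ 3 + 27 * C B ^ 2) = 1 := by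
    have hC : (4 * C A ^ 3 + 27 * C B ^ 2 : k[X]) = C (4 * A ^ 3 + 27 * B ^ 2) := by
      simp only [map_add, map_mul, map_pow, map_ofNat]
    rw [hC, ← map_mul, inv_mul_cancel₀ h, map_one]
  rw [separable_def, hderiv, shortCubic]
  refine ⟨C (4 * A ^ 3 + 27 * B ^ 2)⁻¹ * (-18 * C A * X + 27 * C B),
    C (4 * A ^ 3 + 27 * B ^ 2)⁻¹ * (6 * C A * X ^ 2 - 9 * C B * X + 4 * C A ^ 2), ?_⟩
  linear_combination hinv

end ShortCubic

section Isogeny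

variable {k : Type*} [Field k] (r : k)

/-- The polynomial `X - e`, where `e` is the rational root of the curve with complex multiplication
by `ℤ[√-6]`. Here and below `r` stands for a square root of `2`. -/
noncomputable def cmLinear : k[X] := X + C (2 * r)

/-- The cofactor of `cmLinear` in the cubic of the curve with complex multiplication. -/
noncomputable def cmQuadratic : k[X] := cmLinear r ^ 2 - C (6 * r) * cmLinear r + C (9 + 6 * r)

/-- The cubic of the curve `y² = x³ + (6r - 15) x + (24 - 14r)` with complex multiplication by
`ℤ[√-6]`. -/
noncomputable abbrev cmCubic : k[X] := shortCubic (6 * r - 15) (24 - 14 * r)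

/-- The numerator of the `x`-coordinate of the endomorphism `√-6`. -/
noncomputable def isogNum : k[X] :=
  cmQuadratic r * (cmQuadratic r - 6 * cmLinear r) ^ 2 +
    C (12 * r) * cmLinear r * (cmQuadratic r + C (4 * r - 6) * cmLinear r) ^ 2

/-- The denominator of the `x`-coordinate of the endomorphism `√-6`. -/
noncomputable def isogDen : k[X] :=
  -6 * cmLinear r * (cmQuadratic r + C (4 * r - 6) * cmLinear r) ^ 2

variable {r}

theorem disc_cmCubic_ne_zero (hr : r ^ 2 = 2) (h₂ : (2 : k) ≠ 0) (h₃ : (3 : k) ≠ 0) :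
    4 * (6 * r - 15) ^ 3 + 27 * (24 - 14 * r) ^ 2 ≠ 0 := by
  have hunit : (4 * (6 * r - 15) ^ 3 + 27 * (24 - 14 * r) ^ 2) * (2 * r - 3) = 2 ^ 2 * 3 ^ 3 := by
    linear_combination (3132 - 4968 * r + 1728 * r ^ 2) * hr
  exact left_ne_zero_of_mul (hunit ▸ mul_ne_zero (pow_ne_zero 2 h₂) (pow_ne_zero 3 h₃))

theorem cmCubic_eq_mul (hr : r ^ 2 = 2) : cmCubic r = cmLinear r * cmQuadratic r := by
  have hC : (C r : k[X]) ^ 2 = 2 := by rw [← map_pow, hr, map_ofNat]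
  simp only [cmCubic, shortCubic, cmQuadratic, cmLinear, map_add, map_sub, map_mul, map_ofNat]
  linear_combination (12 * X + 16 * C r - 12) * hC

theorem isCoprime_C_left {c : k} (hc : c ≠ 0) (u : k[X]) : IsCoprime (C c) u :=
  ⟨C c⁻¹, 0, by rw [← C_mul, inv_mul_cancel₀ hc, C_1, zero_mul, add_zero]⟩

theorem isCoprime_cmQuadratic_cmLinear (hr : r ^ 2 = 2) (h₃ : (3 : k) ≠ 0) :
    IsCoprime (cmQuadratic r) (cmLinear r) := by
  have hunit : (9 + 6 * r) * (9 - 6 * r) = 3 ^ 2 := by linear_combination -36 * hr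
  have hne : 9 + 6 * r ≠ 0 := left_ne_zero_of_mul (hunit ▸ pow_ne_zero 2 h₃)
  have heq : cmQuadratic r = C (9 + 6 * r) + cmLinear r * (cmLinear r - C (6 * r)) := by
    rw [cmQuadratic]
    ring
  exact heq ▸ (isCoprime_C_left hne _).add_mul_left_left _

theorem isCoprime_mul_sq_add_mul_sq {q z : k[X]} (hqz : IsCoprime q z) {b : k} (hb : b ≠ 0)
    (hb₆ : b + 6 ≠ 0) (h₆ : (6 : k) ≠ 0) (c : k) :
    IsCoprime (q * (q - 6 * z) ^ 2 + C c * z * (q + C b * z) ^ 2)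
      (-6 * z * (q + C b * z) ^ 2) := by
  have hz : IsCoprime (q - 6 * z) z := IsCoprime.sub_mul_right_left_iff.2 hqz
  have hq : IsCoprime q (q + C b * z) := by
    have h := ((isCoprime_C_left hb q).symm.mul_right hqz).add_mul_left_right 1
    rwa [mul_one, add_comm] at h
  have hlin : IsCoprime (q - 6 * z) (q + C b * z) := by
    have heq : q + C b * z = C (b + 6) * z + (q - 6 * z) * 1 := by
      rw [C_add, C_ofNat]
      ring
    rw [heq, IsCoprime.add_mul_left_right_iff]
    exact (isCoprime_C_left hb₆ _).symm.mul_right hz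
  have hmain : IsCoprime (q * (q - 6 * z) ^ 2) (z * (q + C b * z) ^ 2) :=
    (hqz.mul_left hz.pow_left).mul_right (hq.mul_left hlin.pow_left).pow_right
  have h₆' : IsCoprime (C (-6)) (q * (q - 6 * z) ^ 2 + C c * (z * (q + C b * z) ^ 2)) :=
    isCoprime_C_left (neg_ne_zero.2 h₆) _
  rw [C_neg, C_ofNat] at h₆'
  rw [mul_assoc, mul_assoc]
  exact h₆'.symm.mul_right (hmain.add_mul_right_left _)

theorem isCoprime_isogNum_isogDen (hr : r ^ 2 = 2) (h₂ : (2 : k) ≠ 0) (h₃ : (3 : k) ≠ 0) :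
    IsCoprime (isogNum r) (isogDen r) := by
  have hunit : (4 * r - 6) * (4 * r + 6) = -2 ^ 2 := by linear_combination 16 * hr
  have hsq : (4 * r - 6 + 6) ^ 2 = 2 ^ 5 := by linear_combination 16 * hr
  have h₆ : (6 : k) = 2 * 3 := by norm_num
  exact isCoprime_mul_sq_add_mul_sq (isCoprime_cmQuadratic_cmLinear hr h₃)
    (left_ne_zero_of_mul (hunit ▸ neg_ne_zero.2 (pow_ne_zero 2 h₂)))
    (pow_ne_zero_iff two_ne_zero |>.1 (hsq ▸ pow_ne_zero 5 h₂)) (h₆ ▸ mul_ne_zero h₂ h₃) _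

theorem wronskian_neg_six_mul_mul_sq {q z : k[X]} (hz : derivative z = 1) (b c : k) :
    wronskian (-6 * z * (q + C b * z) ^ 2)
        (q * (q - 6 * z) ^ 2 + C c * z * (q + C b * z) ^ 2) =
      -6 * (z * derivative q - q) * (q - 6 * z) * (q + C b * z) *
        (q ^ 2 + C (3 * b + 6) * q * z - C (6 * b) * z ^ 2) := by
  simp only [wronskian, derivative_mul, derivative_sub, derivative_sq, hz, derivative_C,
    derivative_neg,
    derivative_ofNat, map_add, map_mul, map_ofNat]
  ring

theorem mul_sq_eq_of_sq_eq_two {R : Type*} [CommRing R] {r : R} (hr : r ^ 2 = 2) (q z : R) :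
    (q ^ 2 + 12 * r * q * z + (36 - 24 * r) * z ^ 2) *
        (q ^ 2 + (12 * r - 12) * q * z + (36 - 24 * r) * z ^ 2) ^ 2 =
      q ^ 2 * (q - 6 * z) ^ 4 +
        36 * r * q * z * (q - 6 * z) ^ 2 * (q + (4 * r - 6) * z) ^ 2 +
        36 * (9 + 6 * r) * z ^ 2 * (q + (4 * r - 6) * z) ^ 4 := by
  linear_combination (144 * q ^ 4 * z ^ 2 + (1152 * r - 3456) * q ^ 3 * z ^ 3 +
    (31104 - 24192 * r) * q ^ 2 * z ^ 4 +
    (165888 * r - 124416 - 55296 * r ^ 2) * q * z ^ 5 +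
    (186624 - 373248 * r + 248832 * r ^ 2 - 55296 * r ^ 3) * z ^ 6) * hr

theorem wronskian_isogDen_isogNum (r : k) : wronskian (isogDen r) (isogNum r) =
    -6 * (cmLinear r ^ 2 - C (9 + 6 * r)) * (cmQuadratic r - 6 * cmLinear r) *
      (cmQuadratic r + C (4 * r - 6) * cmLinear r) *
      (cmQuadratic r ^ 2 + C (12 * r - 12) * cmQuadratic r * cmLinear r +
        C (36 - 24 * r) * cmLinear r ^ 2) := by
  have hz : derivative (cmLinear r) = 1 := by
    rw [cmLinear, derivative_add, derivative_X, derivative_C, add_zero]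
  have hq : cmLinear r * derivative (cmQuadratic r) - cmQuadratic r =
      cmLinear r ^ 2 - C (9 + 6 * r) := by
    simp only [cmQuadratic, derivative_add, derivative_sub, derivative_sq, derivative_mul,
      derivative_C, hz, C_ofNat]
    ring
  have hqz : C (3 * (4 * r - 6) + 6) = C (12 * r - 12) ∧
      C (6 * (4 * r - 6)) = -C (36 - 24 * r) := by
    rw [← C_neg]
    constructor <;> ring_nf
  rw [isogDen, isogNum, wronskian_neg_six_mul_mul_sq hz, hq, hqz.1, hqz.2]
  ring

theorem cmCubic_mul_wronskian_sq (hr : r ^ 2 = 2) :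
    cmCubic r * wronskian (isogDen r) (isogNum r) ^ 2 =
      -6 * isogDen r * (isogNum r ^ 3 + C (6 * r - 15) * isogNum r * isogDen r ^ 2 +
        C (24 - 14 * r) * isogDen r ^ 3) := by
  have hC : (C r : k[X]) ^ 2 = 2 := by rw [← map_pow, hr, map_ofNat]
  have hsq : (cmLinear r ^ 2 - C (9 + 6 * r)) ^ 2 =
      cmQuadratic r ^ 2 + 12 * C r * cmQuadratic r * cmLinear r +
        (36 - 24 * C r) * cmLinear r ^ 2 := by
    simp only [cmQuadratic, map_add, map_mul, map_ofNat]
    linear_combination (36 * cmLinear r ^ 2) * hC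
  have hmain := mul_sq_eq_of_sq_eq_two hC (cmQuadratic r) (cmLinear r)
  rw [← hsq] at hmain
  have hshift (u v : k[X]) : (u - 2 * C r * v) ^ 3 + (6 * C r - 15) * (u - 2 * C r * v) * v ^ 2 +
      (24 - 14 * C r) * v ^ 3 = u * (u ^ 2 - 6 * C r * u * v + (9 + 6 * C r) * v ^ 2) := by
    linear_combination (12 * u * v ^ 2 - (8 * C r + 12) * v ^ 3) * hC
  have hnum : isogNum r =
      cmQuadratic r * (cmQuadratic r - 6 * cmLinear r) ^ 2 - 2 * C r * isogDen r := by
    simp only [isogNum, isogDen, map_mul, map_ofNat]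
    ring
  rw [wronskian_isogDen_isogNum, cmCubic_eq_mul hr, hnum]
  simp only [map_add, map_sub, map_mul, map_ofNat] at hmain ⊢
  rw [hshift, isogDen]
  simp only [map_sub, map_mul, map_ofNat]
  generalize cmQuadratic r = q, cmLinear r = z at hmain ⊢
  linear_combination 36 * q * z * (q - 6 * z) ^ 2 * (q + (4 * C r - 6) * z) ^ 2 * hmain

theorem coeff_isogNum (r : k) : (isogNum r).coeff 6 = 1 := by
  rw [isogNum, cmQuadratic, cmLinear]
  compute_degree!

theorem natDegree_isogNum_le (r : k) : (isogNum r).natDegree ≤ 6 := by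
  rw [isogNum, cmQuadratic, cmLinear]
  compute_degree

theorem natDegree_isogDen_le (r : k) : (isogDen r).natDegree ≤ 5 := by
  rw [isogDen, cmQuadratic, cmLinear]
  compute_degree

theorem wronskian_isogDen_isogNum_ne_zero (hr : r ^ 2 = 2) (h₂ : (2 : k) ≠ 0) (h₃ : (3 : k) ≠ 0) :
    wronskian (isogDen r) (isogNum r) ≠ 0 := by
  intro h
  have hderiv := ((isCoprime_isogNum_isogDen hr h₂ h₃).symm.wronskian_eq_zero_iff.1 h).2
  have hcoeff := congr(coeff $hderiv 5)
  rw [coeff_derivative, coeff_isogNum, coeff_zero] at hcoeff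
  refine mul_ne_zero h₂ h₃ ?_
  push_cast at hcoeff
  linear_combination hcoeff

end Isogeny

/-! ### Points of the twist by its own cubic -/

section TwistPoint

variable {k : Type*} [Field k] {A B : k}

theorem nonsingular_twistCurve (h₂ : (2 : k) ≠ 0) {x y : RatFunc k} (hy : y ≠ 0)
    (h : algebraMap k[X] (RatFunc k) (shortCubic A B) * y ^ 2 =
      x ^ 3 + algebraMap k[X] (RatFunc k) (C A) * x + algebraMap k[X] (RatFunc k) (C B)) :
    (twistCurve A B (shortCubic A B)).Nonsingular
      (algebraMap k[X] (RatFunc k) (shortCubic A B) * x)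
      (algebraMap k[X] (RatFunc k) (shortCubic A B) ^ 2 * y) := by
  have h₂' : (2 : RatFunc k) ≠ 0 := by
    rw [← map_ofNat (algebraMap k[X] (RatFunc k)), ← C_ofNat]
    exact RatFunc.algebraMap_ne_zero (C_ne_zero.2 h₂)
  have hf := RatFunc.algebraMap_ne_zero (shortCubic_monic A B).ne_zero
  refine shortCurve_nonsingular_of_ne_zero h₂' (mul_ne_zero (pow_ne_zero 2 hf) hy) ?_
  simp only [map_mul, map_pow]
  linear_combination algebraMap k[X] (RatFunc k) (shortCubic A B) ^ 3 * h

/-- The point of the twist of `y² = x³ + A x + B` by `f = X³ + A X + B` attached to a solution of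
`f y² = x³ + A x + B` in rational functions. -/
noncomputable def twistPoint (h₂ : (2 : k) ≠ 0) {x y : RatFunc k} (hy : y ≠ 0)
    (h : algebraMap k[X] (RatFunc k) (shortCubic A B) * y ^ 2 =
      x ^ 3 + algebraMap k[X] (RatFunc k) (C A) * x + algebraMap k[X] (RatFunc k) (C B)) :
    (twistCurve A B (shortCubic A B)).Point :=
  .some _ _ (nonsingular_twistCurve h₂ hy h)

theorem hasMultiplier_twistPoint (h₂ : (2 : k) ≠ 0) {x y : RatFunc k} (hy : y ≠ 0)
    (h : algebraMap k[X] (RatFunc k) (shortCubic A B) * y ^ 2 =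
      x ^ 3 + algebraMap k[X] (RatFunc k) (C A) * x + algebraMap k[X] (RatFunc k) (C B))
    {c : RatFunc k} (hx : ratFuncDeriv k x = c * y) :
    HasMultiplier (ratFuncDeriv k) (algebraMap k[X] (RatFunc k) (shortCubic A B)) c
      (twistPoint h₂ hy h) := by
  have hf := RatFunc.algebraMap_ne_zero (shortCubic_monic A B).ne_zero
  refine HasMultiplier.some_of_ne_zero ?_ ?_ (mul_ne_zero (pow_ne_zero 2 hf) hy) _ ?_ <;>
    simp only [Derivation.leibniz, Derivation.leibniz_pow, ratFuncDeriv_algebraMap, map_mul,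
      map_pow, derivative_C, map_zero, smul_eq_mul, nsmul_eq_mul, mul_zero, add_zero, hx] <;>
    push_cast <;>
    ring

theorem twistDegree_twistPoint (h₂ : (2 : k) ≠ 0) {x y : RatFunc k} (hy : y ≠ 0)
    (h : algebraMap k[X] (RatFunc k) (shortCubic A B) * y ^ 2 =
      x ^ 3 + algebraMap k[X] (RatFunc k) (C A) * x + algebraMap k[X] (RatFunc k) (C B))
    {u v : k[X]} (huv : IsCoprime u v) {n : ℕ}
    (hx : x * algebraMap k[X] (RatFunc k) v = algebraMap k[X] (RatFunc k) u)
    (hu : u.coeff n ≠ 0) (hun : u.natDegree ≤ n) (hvn : v.natDegree < n) :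
    twistDegree (twistPoint h₂ hy h) = n ∧
      leadingVec (twistCoord (twistPoint h₂ hy h)) 1 = 0 := by
  have hle : ∀ i, (![u, v] i).natDegree ≤ n := Fin.forall_fin_two.2 ⟨hun, hvn.le⟩
  have hne : (fun i => (![u, v] i).coeff n) ≠ 0 := fun h => hu (congrFun h 0)
  obtain ⟨a, -, hdeg, hlead⟩ := exists_twistDegree_eq_and_leadingVec_eq
    (shortCubic_monic A B).ne_zero (nonsingular_twistCurve h₂ hy h) huv
    (by rw [mul_assoc, hx, map_mul])
  rw [vecDegree_eq_of_coeff_ne_zero hle hne] at hdeg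
  rw [leadingVec_eq_of_coeff_ne_zero hle hne] at hlead
  refine ⟨hdeg, (congrFun hlead 1).trans ?_⟩
  simp only [Pi.smul_apply, Matrix.cons_val, coeff_eq_zero_of_natDegree_lt hvn, smul_zero]

open Classical in
theorem exists_twistPoint_sub_twistPoint_eq_some (h₂ : (2 : k) ≠ 0) {x₁ y₁ x₂ y₂ : RatFunc k}
    (hy₁ : y₁ ≠ 0) (hy₂ : y₂ ≠ 0)
    (h₁ : algebraMap k[X] (RatFunc k) (shortCubic A B) * y₁ ^ 2 =
      x₁ ^ 3 + algebraMap k[X] (RatFunc k) (C A) * x₁ + algebraMap k[X] (RatFunc k) (C B))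
    (h₂' : algebraMap k[X] (RatFunc k) (shortCubic A B) * y₂ ^ 2 =
      x₂ ^ 3 + algebraMap k[X] (RatFunc k) (C A) * x₂ + algebraMap k[X] (RatFunc k) (C B))
    (hx : x₁ ≠ x₂) :
    ∃ x₃ y₃, ∃ h₃, twistPoint h₂ hy₁ h₁ - twistPoint h₂ hy₂ h₂' = .some x₃ y₃ h₃ ∧
      x₃ * (x₁ - x₂) ^ 2 = algebraMap k[X] (RatFunc k) (shortCubic A B) *
        (algebraMap k[X] (RatFunc k) (shortCubic A B) * (y₁ + y₂) ^ 2 -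
          (x₁ + x₂) * (x₁ - x₂) ^ 2) := by
  have hf := RatFunc.algebraMap_ne_zero (shortCubic_monic A B).ne_zero
  obtain ⟨h', hneg⟩ := shortCurve_neg_some (nonsingular_twistCurve h₂ hy₂ h₂')
  obtain ⟨l, x₃, y₃, h₃, hadd, hl, -, hx₃, -⟩ := exists_slope_of_add_some
    (nonsingular_twistCurve h₂ hy₁ h₁) h' fun h => hx (mul_left_cancel₀ hf h.1)
  refine ⟨x₃, y₃, h₃, ?_, ?_⟩
  · rw [sub_eq_add_neg, twistPoint, twistPoint, hneg, hadd]
  · have hl' : l * (x₁ - x₂) = algebraMap k[X] (RatFunc k) (shortCubic A B) * (y₁ + y₂) :=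
      mul_left_cancel₀ hf (by linear_combination hl)
    rw [hx₃]
    linear_combination (l * (x₁ - x₂) +
      algebraMap k[X] (RatFunc k) (shortCubic A B) * (y₁ + y₂)) * hl'

theorem idPoint_equation (A B : k) :
    algebraMap k[X] (RatFunc k) (shortCubic A B) * 1 ^ 2 =
      algebraMap k[X] (RatFunc k) X ^ 3 +
        algebraMap k[X] (RatFunc k) (C A) * algebraMap k[X] (RatFunc k) X +
        algebraMap k[X] (RatFunc k) (C B) := by
  rw [one_pow, mul_one, shortCubic, map_add, map_add, map_pow, map_mul]

/-- The point `(X, 1)` of `f y² = x³ + A x + B`. -/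
noncomputable def idPoint (h₂ : (2 : k) ≠ 0) (A B : k) : (twistCurve A B (shortCubic A B)).Point :=
  twistPoint h₂ (x := algebraMap k[X] (RatFunc k) X) one_ne_zero
    (idPoint_equation A B)

theorem hasMultiplier_idPoint (h₂ : (2 : k) ≠ 0) (A B : k) :
    HasMultiplier (ratFuncDeriv k) (algebraMap k[X] (RatFunc k) (shortCubic A B)) 1
      (idPoint h₂ A B) :=
  hasMultiplier_twistPoint h₂ _ _ (by rw [ratFuncDeriv_algebraMap, derivative_X, map_one, one_mul])

theorem twistDegree_idPoint (h₂ : (2 : k) ≠ 0) (A B : k) :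
    twistDegree (idPoint h₂ A B) = 1 ∧ leadingVec (twistCoord (idPoint h₂ A B)) 1 = 0 :=
  twistDegree_twistPoint h₂ _ _ isCoprime_one_right (by rw [map_one, mul_one])
    (by simp) natDegree_X_le (by simp)

end TwistPoint

section IsogenyPoint

variable {k : Type*} [Field k] {r c : k}

theorem ratFuncDeriv_div (u v : k[X]) :
    ratFuncDeriv k (algebraMap k[X] (RatFunc k) u / algebraMap k[X] (RatFunc k) v) =
      algebraMap k[X] (RatFunc k) (wronskian v u) / algebraMap k[X] (RatFunc k) v ^ 2 := by
  rw [Derivation.leibniz_div, ratFuncDeriv_algebraMap, ratFuncDeriv_algebraMap, wronskian,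
    map_sub, map_mul, map_mul]
  simp only [smul_eq_mul]
  ring

/-- The `x`-coordinate of the endomorphism `√-6`, as a rational function. -/
noncomputable def isogMap (r : k) : RatFunc k :=
  algebraMap k[X] (RatFunc k) (isogNum r) / algebraMap k[X] (RatFunc k) (isogDen r)

theorem isogDen_ne_zero (hr : r ^ 2 = 2) (h₂ : (2 : k) ≠ 0) (h₃ : (3 : k) ≠ 0) :
    isogDen r ≠ 0 := by
  intro h
  refine wronskian_isogDen_isogNum_ne_zero hr h₂ h₃ ?_
  rw [h, wronskian_zero_left]

theorem ratFuncDeriv_isogMap_ne_zero (hr : r ^ 2 = 2) (h₂ : (2 : k) ≠ 0) (h₃ : (3 : k) ≠ 0) :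
    ratFuncDeriv k (isogMap r) ≠ 0 := by
  rw [isogMap, ratFuncDeriv_div]
  exact div_ne_zero
    (RatFunc.algebraMap_ne_zero (wronskian_isogDen_isogNum_ne_zero hr h₂ h₃))
    (pow_ne_zero 2 (RatFunc.algebraMap_ne_zero (isogDen_ne_zero hr h₂ h₃)))

theorem cmCubic_mul_ratFuncDeriv_isogMap_sq (hr : r ^ 2 = 2) (h₂ : (2 : k) ≠ 0)
    (h₃ : (3 : k) ≠ 0) :
    algebraMap k[X] (RatFunc k) (cmCubic r) * ratFuncDeriv k (isogMap r) ^ 2 =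
      -6 * (isogMap r ^ 3 + algebraMap k[X] (RatFunc k) (C (6 * r - 15)) * isogMap r +
        algebraMap k[X] (RatFunc k) (C (24 - 14 * r))) := by
  have hv := RatFunc.algebraMap_ne_zero (isogDen_ne_zero hr h₂ h₃)
  have h := congr(algebraMap k[X] (RatFunc k) $(cmCubic_mul_wronskian_sq hr))
  simp only [map_mul, map_add, map_pow, map_neg, map_ofNat] at h
  rw [isogMap, ratFuncDeriv_div]
  generalize algebraMap k[X] (RatFunc k) (C (6 * r - 15)) = a,
    algebraMap k[X] (RatFunc k) (C (24 - 14 * r)) = b at h ⊢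
  field_simp
  linear_combination h

theorem sqrt_neg_six_ne_zero (hc : c ^ 2 = -6) (h₂ : (2 : k) ≠ 0) (h₃ : (3 : k) ≠ 0) : c ≠ 0 := by
  rintro rfl
  exact mul_ne_zero h₂ h₃ (by linear_combination hc)

/-- The point attached to the endomorphism `√-6`, for a choice of `c = √-6` in the base field. -/
noncomputable def isogPoint (hr : r ^ 2 = 2) (hc : c ^ 2 = -6) (h₂ : (2 : k) ≠ 0)
    (h₃ : (3 : k) ≠ 0) : (twistCurve (6 * r - 15) (24 - 14 * r) (cmCubic r)).Point :=
  twistPoint h₂ (x := isogMap r)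
    (y := ratFuncDeriv k (isogMap r) / algebraMap k[X] (RatFunc k) (C c))
    (div_ne_zero (ratFuncDeriv_isogMap_ne_zero hr h₂ h₃) (RatFunc.algebraMap_ne_zero
      (C_ne_zero.2 (sqrt_neg_six_ne_zero hc h₂ h₃)))) <| by
    have hc' : algebraMap k[X] (RatFunc k) (C c) ^ 2 = -6 := by
      rw [← map_pow, ← map_pow, hc, map_neg, map_neg, map_ofNat, map_ofNat]
    have h₆ : (-6 : RatFunc k) ≠ 0 := hc' ▸ pow_ne_zero 2 (RatFunc.algebraMap_ne_zero
      (C_ne_zero.2 (sqrt_neg_six_ne_zero hc h₂ h₃)))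
    rw [div_pow, mul_div_assoc', hc', div_eq_iff h₆]
    exact (cmCubic_mul_ratFuncDeriv_isogMap_sq hr h₂ h₃).trans (mul_comm _ _)

theorem hasMultiplier_isogPoint (hr : r ^ 2 = 2) (hc : c ^ 2 = -6) (h₂ : (2 : k) ≠ 0)
    (h₃ : (3 : k) ≠ 0) :
    HasMultiplier (ratFuncDeriv k) (algebraMap k[X] (RatFunc k) (cmCubic r))
      (algebraMap k[X] (RatFunc k) (C c)) (isogPoint hr hc h₂ h₃) :=
  hasMultiplier_twistPoint h₂ _ _ (mul_div_cancel₀ _ (RatFunc.algebraMap_ne_zero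
    (C_ne_zero.2 (sqrt_neg_six_ne_zero hc h₂ h₃)))).symm

theorem twistDegree_isogPoint (hr : r ^ 2 = 2) (hc : c ^ 2 = -6) (h₂ : (2 : k) ≠ 0)
    (h₃ : (3 : k) ≠ 0) :
    twistDegree (isogPoint hr hc h₂ h₃) = 6 ∧
      leadingVec (twistCoord (isogPoint hr hc h₂ h₃)) 1 = 0 :=
  twistDegree_twistPoint h₂ _ _ (isCoprime_isogNum_isogDen hr h₂ h₃)
    (div_mul_cancel₀ _ (RatFunc.algebraMap_ne_zero (isogDen_ne_zero hr h₂ h₃)))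
    (coeff_isogNum r ▸ one_ne_zero) (natDegree_isogNum_le r)
    (Nat.lt_succ_of_le (natDegree_isogDen_le r))

end IsogenyPoint

/-! ### The Frobenius point -/

section Cancellation

variable {K : Type*} [Field K]

theorem min_rootMultiplicity_sub {f g : K[X]} {c : K} {n : ℕ} (hf : f ≠ 0) (hfg : f - g ≠ 0)
    (hg : (X - C c) ^ n ∣ g) :
    min ((f - g).rootMultiplicity c) n = min (f.rootMultiplicity c) n := by
  refine eq_of_forall_le_iff fun j => ?_
  rw [le_min_iff, le_min_iff, le_rootMultiplicity_iff hf, le_rootMultiplicity_iff hfg]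
  exact and_congr_left fun hj => dvd_sub_left ((pow_dvd_pow _ hj).trans hg)

variable [Fintype K]

theorem prod_X_sub_C_eq_X_pow_card_sub_X : ∏ c : K, (X - C c) = X ^ Fintype.card K - X := by
  have hroots := FiniteField.roots_X_pow_card_sub_X K
  have h := prod_multiset_X_sub_C_of_monic_of_roots_card_eq (p := (X ^ Fintype.card K - X : K[X]))
    (monic_X_pow_sub (by rw [degree_X]; exact_mod_cast Fintype.one_lt_card))
    (by rw [hroots, FiniteField.X_pow_card_sub_X_natDegree_eq K Fintype.one_lt_card]; rfl)
  rwa [hroots] at h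

theorem natDegree_prod_X_sub_C_pow (e : K → ℕ) :
    (∏ c, (X - C c) ^ e c).natDegree = ∑ c, e c := by
  rw [natDegree_prod_of_monic _ _ fun c _ => (monic_X_sub_C c).pow _]
  simp only [(monic_X_sub_C _).natDegree_pow, natDegree_X_sub_C, mul_one]

theorem prod_X_sub_C_pow_rootMultiplicity_dvd (N : K[X]) (n : ℕ) :
    ∏ c, (X - C c) ^ min (N.rootMultiplicity c) n ∣ N :=
  prod_dvd_of_coprime
    (fun _ _ _ _ hcd => (isCoprime_X_sub_C_of_isUnit_sub (sub_ne_zero.2 hcd).isUnit).pow)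
    fun c _ => (pow_dvd_pow _ (min_le_left _ _)).trans (pow_rootMultiplicity_dvd N c)

theorem exists_isCoprime_mul_X_pow_card_sub_X_pow {N : K[X]} (hN : N ≠ 0) (n : ℕ) :
    ∃ u v : K[X], IsCoprime u v ∧ u * (X ^ Fintype.card K - X) ^ n = N * v ∧
      u.natDegree + ∑ c, min (N.rootMultiplicity c) n = N.natDegree ∧
      v.natDegree + ∑ c, min (N.rootMultiplicity c) n = n * Fintype.card K := by
  set e : K → ℕ := fun c => min (N.rootMultiplicity c) n
  have he : ∀ c, n - e c + e c = n := fun c => Nat.sub_add_cancel (min_le_right _ _)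
  obtain ⟨u, hu⟩ := prod_X_sub_C_pow_rootMultiplicity_dvd N n
  have hu₀ : u ≠ 0 := fun h => hN (by rw [hu, h, mul_zero])
  refine ⟨u, ∏ c, (X - C c) ^ (n - e c), IsCoprime.prod_right fun c _ => ?_, ?_, ?_, ?_⟩
  · rcases lt_or_ge (N.rootMultiplicity c) n with hlt | hge
    · refine IsCoprime.pow_right (IsCoprime.symm
        ((irreducible_X_sub_C c).coprime_iff_not_dvd.2 fun hdvd => ?_))
      have h := mul_dvd_mul (dvd_prod_of_mem (fun c => (X - C c) ^ e c) (mem_univ c)) hdvd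
      rw [← hu, ← pow_succ, ← le_rootMultiplicity_iff hN] at h
      exact absurd h (by simp only [e, min_eq_left hlt.le]; omega)
    · rw [show n - e c = 0 by simp only [e, min_eq_right hge, Nat.sub_self], pow_zero]
      exact isCoprime_one_right
  · have hprod : (∏ c, (X - C c) ^ (n - e c)) * ∏ c, (X - C c) ^ e c =
        (X ^ Fintype.card K - X : K[X]) ^ n := by
      rw [← prod_mul_distrib, ← prod_X_sub_C_eq_X_pow_card_sub_X, ← prod_pow]
      exact prod_congr rfl fun c _ => by rw [← pow_add, he]
    rw [← hprod]
    linear_combination (-∏ c, (X - C c) ^ (n - e c)) * hu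
  · rw [congrArg natDegree hu,
      natDegree_mul (monic_prod_of_monic _ _ fun c _ => (monic_X_sub_C c).pow _).ne_zero hu₀,
      natDegree_prod_X_sub_C_pow, add_comm]
  · rw [natDegree_prod_X_sub_C_pow, ← sum_add_distrib, sum_congr rfl fun c _ => he c, sum_const,
      card_univ, smul_eq_mul, mul_comm]

end Cancellation

section FrobeniusSub

variable {K : Type*} [Field K] [Fintype K]

/-- The numerator of `x(F - ι) = N / (X^q - X)²`, where `F = (X^q, f^((q - 1)/2))` and
`ι = (X, 1)`. -/
noncomputable def frobSubNum (f : K[X]) : K[X] :=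
  f * (f ^ (Fintype.card K / 2) + 1) ^ 2 -
    (X ^ Fintype.card K + X) * (X ^ Fintype.card K - X) ^ 2

theorem two_mul_card_div_two_add_one (hK : ringChar K ≠ 2) :
    2 * (Fintype.card K / 2) + 1 = Fintype.card K :=
  Nat.two_mul_div_two_add_one_of_odd
    (Nat.odd_iff.2 (FiniteField.odd_card_of_char_ne_two hK))

theorem shortCubic_pow_card (A B : K) :
    shortCubic A B ^ Fintype.card K =
      (X ^ Fintype.card K) ^ 3 + C A * X ^ Fintype.card K + C B := by
  rw [← FiniteField.expand_card, shortCubic]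
  simp only [map_add, map_mul, map_pow, expand_C, expand_X]

theorem natDegree_frobSubNum (hK : ringChar K ≠ 2) (A B : K) :
    (frobSubNum (shortCubic A B)).natDegree = 2 * Fintype.card K + 1 := by
  have hq := two_mul_card_div_two_add_one hK
  have hq₁ : 1 < Fintype.card K := Fintype.one_lt_card
  have hpow := shortCubic_pow_card A B
  set q := Fintype.card K
  set f := shortCubic A B
  have hexp : frobSubNum f = X ^ (2 * q + 1) +
      (X ^ (q + 2) + C A * X ^ q + C 2 * f ^ (q / 2 + 1) + C A * X + C (B + B)) := by
    have h : f ^ (2 * (q / 2) + 1) = (X ^ q) ^ 3 + C A * X ^ q + C B := by rw [hq, hpow]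
    have hf : f = X ^ 3 + C A * X + C B := rfl
    rw [frobSubNum, C_ofNat, C_add]
    linear_combination h + hf
  have hfpow : (f ^ (q / 2 + 1)).natDegree = 3 * (q / 2 + 1) := by
    rw [(shortCubic_monic A B).natDegree_pow, natDegree_shortCubic, mul_comm]
  rw [hexp, natDegree_add_eq_left_of_natDegree_lt, natDegree_X_pow]
  rw [natDegree_X_pow, Nat.lt_succ_iff]
  refine natDegree_add_le_of_degree_le (natDegree_add_le_of_degree_le (natDegree_add_le_of_degree_le
    (natDegree_add_le_of_degree_le ?_ ?_) ?_) ?_) ?_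
  · exact (natDegree_X_pow _).trans_le (by omega)
  · exact (natDegree_C_mul_X_pow_le _ _).trans (by omega)
  · exact (natDegree_C_mul_le _ _).trans (by omega)
  · exact ((natDegree_C_mul_le _ _).trans natDegree_X_le).trans (by omega)
  · exact (natDegree_C _).trans_le (Nat.zero_le _)

theorem min_rootMultiplicity_frobSubNum [DecidableEq K] (hK : ringChar K ≠ 2) {f : K[X]}
    (hf : f.Separable) (hdeg : f.natDegree ≠ 0) (hN : frobSubNum f ≠ 0) (c : K) :
    (min ((frobSubNum f).rootMultiplicity c) 2 : ℕ) = 1 - quadraticChar K (f.eval c) := by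
  set m := Fintype.card K / 2
  have hm : m ≠ 0 := (Nat.div_pos Fintype.one_lt_card two_pos).ne'
  have h₂ : (2 : K) ≠ 0 := Ring.two_ne_zero hK
  have hdvd : (X - C c) ^ 2 ∣ (X ^ Fintype.card K + X) * (X ^ Fintype.card K - X) ^ 2 := by
    refine (pow_dvd_pow_of_dvd (dvd_iff_isRoot.2 ?_) 2).mul_left _
    rw [IsRoot, eval_sub, eval_pow, eval_X, FiniteField.pow_card, sub_self]
  have hg : f ^ m + 1 ≠ 0 := ne_zero_of_natDegree_gt (n := 0) <| by
    rw [← C_1, natDegree_add_C, natDegree_pow]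
    exact Nat.pos_of_ne_zero (mul_ne_zero hm hdeg)
  have hroot : (f ^ m + 1).IsRoot c ↔ (quadraticChar K (f.eval c) : K) + 1 = 0 := by
    rw [IsRoot, eval_add, eval_pow, eval_one, quadraticChar_eq_pow_of_char_ne_two' hK]
  have hprod : f * (f ^ m + 1) ^ 2 ≠ 0 := mul_ne_zero hf.ne_zero (pow_ne_zero 2 hg)
  rw [frobSubNum, min_rootMultiplicity_sub hprod hN hdvd, rootMultiplicity_mul hprod, sq,
    rootMultiplicity_mul (mul_ne_zero hg hg)]
  rcases quadraticChar_isQuadratic (F := K) (f.eval c) with h | h | h <;> rw [h] at hroot ⊢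
  · have hle := rootMultiplicity_le_one_of_separable hf c
    have hpos := (rootMultiplicity_pos hf.ne_zero).2 (quadraticChar_eq_zero_iff.1 h)
    rw [rootMultiplicity_eq_zero (x := c) (p := f ^ m + 1) fun h' => by simpa using hroot.1 h']
    omega
  · have hne : ¬ f.IsRoot c := fun h' => by
      rw [quadraticChar_eq_zero_iff.2 h'] at h
      exact zero_ne_one h
    rw [rootMultiplicity_eq_zero hne, rootMultiplicity_eq_zero
      (fun h' => h₂ (by simpa [one_add_one_eq_two] using hroot.1 h'))]
    rfl
  · have hpos := (rootMultiplicity_pos hg).2 (hroot.2 (by simp))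
    rw [min_eq_right (by omega)]
    rfl

end FrobeniusSub

section FrobeniusPoint

variable {K : Type*} [Field K] [Fintype K]

theorem frobPoint_equation (hK : ringChar K ≠ 2) (A B : K) :
    algebraMap K[X] (RatFunc K) (shortCubic A B) *
        algebraMap K[X] (RatFunc K) (shortCubic A B ^ (Fintype.card K / 2)) ^ 2 =
      algebraMap K[X] (RatFunc K) (X ^ Fintype.card K) ^ 3 +
        algebraMap K[X] (RatFunc K) (C A) * algebraMap K[X] (RatFunc K) (X ^ Fintype.card K) +
        algebraMap K[X] (RatFunc K) (C B) := by
  simp only [← map_pow, ← map_mul, ← map_add]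
  rw [← shortCubic_pow_card, ← pow_mul, ← pow_succ', mul_comm, two_mul_card_div_two_add_one hK]

/-- The Frobenius endomorphism as a point: `(X^q, f^((q - 1)/2))` on `f y² = x³ + A x + B`. -/
noncomputable def frobPoint (hK : ringChar K ≠ 2) (A B : K) :
    (twistCurve A B (shortCubic A B)).Point :=
  twistPoint (Ring.two_ne_zero hK)
    (x := algebraMap K[X] (RatFunc K) (X ^ Fintype.card K))
    (y := algebraMap K[X] (RatFunc K) (shortCubic A B ^ (Fintype.card K / 2)))
    (RatFunc.algebraMap_ne_zero (pow_ne_zero _ (shortCubic_monic A B).ne_zero))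
    (frobPoint_equation hK A B)

open Classical in
theorem exists_frobPoint_sub_idPoint_eq_some (hK : ringChar K ≠ 2) (A B : K) :
    ∃ x y, ∃ h, frobPoint hK A B - idPoint (Ring.two_ne_zero hK) A B = .some x y h ∧
      x * algebraMap K[X] (RatFunc K) ((X ^ Fintype.card K - X) ^ 2) =
        algebraMap K[X] (RatFunc K) (shortCubic A B * frobSubNum (shortCubic A B)) := by
  have hT : algebraMap K[X] (RatFunc K) (X ^ Fintype.card K) ≠ algebraMap K[X] (RatFunc K) X :=
    fun h => FiniteField.X_pow_card_sub_X_ne_zero K Fintype.one_lt_card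
      (sub_eq_zero.2 (RatFunc.algebraMap_injective K h))
  obtain ⟨x, y, h, hsub, hx⟩ := exists_twistPoint_sub_twistPoint_eq_some (Ring.two_ne_zero hK)
    (RatFunc.algebraMap_ne_zero (pow_ne_zero _ (shortCubic_monic A B).ne_zero)) one_ne_zero
    (frobPoint_equation hK A B) (idPoint_equation A B) hT
  refine ⟨x, y, h, hsub, ?_⟩
  rw [map_pow, map_sub, hx, frobSubNum]
  simp only [map_sub, map_mul, map_add, map_one, map_pow]

open Classical in
theorem twistDegree_frobPoint_sub_idPoint [DecidableEq K] (hK : ringChar K ≠ 2) {A B : K}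
    (hdisc : 4 * A ^ 3 + 27 * B ^ 2 ≠ 0) :
    (twistDegree (frobPoint hK A B - idPoint (Ring.two_ne_zero hK) A B) : ℤ) =
      Fintype.card K + 1 + ∑ c, quadraticChar K ((shortCubic A B).eval c) := by
  have hN := natDegree_frobSubNum hK A B
  have hN₀ : frobSubNum (shortCubic A B) ≠ 0 := ne_zero_of_natDegree_gt (n := 0) (by omega)
  have hT := pow_ne_zero 2 (FiniteField.X_pow_card_sub_X_ne_zero K (Fintype.one_lt_card (α := K)))
  obtain ⟨u, v, huv, hmul, hu, hv⟩ := exists_isCoprime_mul_X_pow_card_sub_X_pow hN₀ 2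
  obtain ⟨x, y, h, hsub, hx⟩ := exists_frobPoint_sub_idPoint_eq_some hK A B
  have hx' : x * algebraMap K[X] (RatFunc K) v =
      algebraMap K[X] (RatFunc K) (shortCubic A B * u) := by
    refine mul_right_cancel₀ (RatFunc.algebraMap_ne_zero hT) ?_
    rw [mul_right_comm, hx, ← map_mul, ← map_mul, mul_assoc, mul_assoc, ← hmul]
  obtain ⟨-, -, hdeg, -⟩ :=
    exists_twistDegree_eq_and_leadingVec_eq (shortCubic_monic A B).ne_zero h huv hx'
  have hsum : ((∑ c, min ((frobSubNum (shortCubic A B)).rootMultiplicity c) 2 : ℕ) : ℤ) =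
      Fintype.card K - ∑ c, quadraticChar K ((shortCubic A B).eval c) := by
    rw [Nat.cast_sum, sum_congr rfl fun c _ => min_rootMultiplicity_frobSubNum hK
      (shortCubic_separable hdisc) (by rw [natDegree_shortCubic]; norm_num) hN₀ c,
      sum_sub_distrib, sum_const, card_univ, nsmul_one]
  rw [hsub, hdeg, vecDegree_pair]
  omega

end FrobeniusPoint

/-! ### Points of degree `p` with multiplier zero -/

section FrobeniusUniqueness

open WeierstrassCurve

variable {k : Type*} [Field k] {A B : k} {f : k[X]}

theorem eq_one_and_eq_zero_of_shortCubic_dvd_comp (h₃ : (3 : k) ≠ 0) (hA : A ≠ 0) (hB : B ≠ 0)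
    {a b : k} (ha : a ≠ 0) (h : shortCubic A B ∣ (shortCubic A B).comp (C a * X + C b)) :
    a = 1 ∧ b = 0 := by
  have hremainder : (shortCubic A B).comp (C a * X + C b) - C (a ^ 3) * shortCubic A B =
      C (3 * a ^ 2 * b) * X ^ 2 + C (3 * a * b ^ 2 + A * a - a ^ 3 * A) * X +
        C (b ^ 3 + A * b + B - a ^ 3 * B) := by
    simp only [shortCubic, add_comp, mul_comp, pow_comp, X_comp, C_comp, map_add, map_sub, map_mul,
      map_pow, map_ofNat]
    ring
  have hdvd := hremainder ▸ dvd_sub h (dvd_mul_left _ _)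
  have hzero := eq_zero_of_dvd_of_natDegree_lt hdvd
    (natDegree_quadratic_le.trans_lt (by rw [natDegree_shortCubic]; norm_num))
  have hcoeff₂ := congr(coeff $hzero 2)
  have hcoeff₁ := congr(coeff $hzero 1)
  have hcoeff₀ := congr(coeff $hzero 0)
  simp only [coeff_add, coeff_C_mul, coeff_X_pow, coeff_X, coeff_C, coeff_zero]
    at hcoeff₂ hcoeff₁ hcoeff₀
  norm_num at hcoeff₂ hcoeff₁ hcoeff₀
  obtain rfl : b = 0 := by simpa [h₃, ha] using hcoeff₂
  have hsq : a ^ 2 = 1 := mul_left_cancel₀ (mul_ne_zero hA ha) (by linear_combination -hcoeff₁)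
  have hcube : a ^ 3 = 1 := mul_left_cancel₀ hB (by linear_combination -hcoeff₀)
  exact ⟨by linear_combination hcube - a * hsq, rfl⟩

theorem dvd_of_sq_eq_algebraMap_cube_mul_pow {g : k[X]} (hf : Squarefree f) {n : ℕ} (hn : n ≠ 0)
    {y : RatFunc k} (hy : y ^ 2 = algebraMap k[X] (RatFunc k) (f ^ 3 * g ^ n)) : f ∣ g := by
  obtain ⟨z, rfl⟩ := IsIntegrallyClosed.exists_algebraMap_eq_of_isIntegral_pow two_pos
    (hy ▸ isIntegral_algebraMap : _root_.IsIntegral k[X] (y ^ 2))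
  have hz : z ^ 2 = f ^ 3 * g ^ n := RatFunc.algebraMap_injective k (by rw [map_pow, hy])
  obtain ⟨z, rfl⟩ := (hf.dvd_pow_iff_dvd two_ne_zero).1
    (hz ▸ (dvd_pow_self f three_ne_zero).mul_right _ : f ∣ z ^ 2)
  have hz' : z ^ 2 = f * g ^ n :=
    mul_left_cancel₀ (pow_ne_zero 2 hf.ne_zero) (by linear_combination hz)
  obtain ⟨z, rfl⟩ := (hf.dvd_pow_iff_dvd two_ne_zero).1 (hz' ▸ dvd_mul_right _ _ : f ∣ z ^ 2)
  exact (hf.dvd_pow_iff_dvd hn).1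
    ⟨z ^ 2, mul_left_cancel₀ hf.ne_zero (by linear_combination -hz')⟩

theorem exists_twistCoord_eq_expand_of_twistDegree_eq (p : ℕ) [Fact p.Prime] [CharP k p]
    (hf : f ≠ 0) {P : (twistCurve A B f).Point}
    (hP : HasMultiplier (ratFuncDeriv k) (algebraMap k[X] (RatFunc k) f) 0 P)
    (hdeg : twistDegree P = p) (hlead : leadingVec (twistCoord P) 1 = 0) :
    ∃ u d, u.natDegree = 1 ∧ d ≠ 0 ∧ twistCoord P 0 = expand k p u ∧ twistCoord P 1 = C d := by
  have hp : 0 < p := (Fact.out : p.Prime).pos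
  obtain ⟨u, hu⟩ : ∃ u, twistCoord P 0 = expand k p u :=
    ⟨_, (expand_contract p (derivative_twistCoord_of_hasMultiplier_zero hf hP 0) hp.ne').symm⟩
  obtain ⟨v, hv⟩ : ∃ v, twistCoord P 1 = expand k p v :=
    ⟨_, (expand_contract p (derivative_twistCoord_of_hasMultiplier_zero hf hP 1) hp.ne').symm⟩
  have hmax : max u.natDegree v.natDegree = 1 := by
    have hcoord : twistCoord P = ![expand k p u, expand k p v] := by
      ext i : 1
      fin_cases i
      exacts [hu, hv]
    rw [twistDegree, hcoord, vecDegree_pair, natDegree_expand, natDegree_expand,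
      Nat.mul_max_mul_right] at hdeg
    exact Nat.eq_of_mul_eq_mul_right hp (hdeg.trans (one_mul p).symm)
  have hv₁ : v.coeff 1 = 0 := by
    rw [← hlead, leadingVec, ← twistDegree, hdeg, hv, ← coeff_expand_mul hp, one_mul]
  obtain ⟨d, rfl⟩ : ∃ d, v = C d := ⟨v.coeff 0, by
    conv_lhs => rw [eq_X_add_C_of_natDegree_le_one ((le_max_right _ _).trans_eq hmax), hv₁, C_0,
      zero_mul, zero_add]⟩
  rw [natDegree_C, Nat.max_zero] at hmax
  rw [expand_C] at hv
  refine ⟨u, d, hmax, ?_, hu, hv⟩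
  rintro rfl
  have hunit := isCoprime_twistCoord P
  rw [hv, hu, C_0, isCoprime_zero_right] at hunit
  have hconst := natDegree_eq_zero_of_isUnit hunit
  rw [natDegree_expand, hmax, one_mul] at hconst
  exact hp.ne' hconst

theorem exists_eq_some_of_twistDegree_eq (p : ℕ) [Fact p.Prime] [CharP k p] (hf : f ≠ 0)
    {P : (twistCurve A B f).Point}
    (hP : HasMultiplier (ratFuncDeriv k) (algebraMap k[X] (RatFunc k) f) 0 P)
    (hdeg : twistDegree P = p) (hlead : leadingVec (twistCoord P) 1 = 0) :
    ∃ a b x y h, a ≠ 0 ∧ P = .some x y h ∧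
      x = algebraMap k[X] (RatFunc k) (f * expand k p (C a * X + C b)) := by
  obtain ⟨u, d, hu, hd, hcoord₀, hcoord₁⟩ :=
    exists_twistCoord_eq_expand_of_twistDegree_eq p hf hP hdeg hlead
  rcases P with _ | ⟨x, y, h⟩
  · exact absurd hcoord₁.symm (C_ne_zero.2 hd)
  refine ⟨u.coeff 1 / d, u.coeff 0 / d, x, y, h, div_ne_zero ?_ hd, rfl, ?_⟩
  · rw [← hu]
    exact leadingCoeff_ne_zero.2 (ne_zero_of_natDegree_gt (hu ▸ one_pos))
  · have hscale : u = (C (u.coeff 1 / d) * X + C (u.coeff 0 / d)) * C d := by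
      rw [add_mul, mul_right_comm, ← C_mul, ← C_mul, div_mul_cancel₀ _ hd, div_mul_cancel₀ _ hd]
      exact eq_X_add_C_of_natDegree_le_one hu.le
    refine mul_right_cancel₀ (RatFunc.algebraMap_ne_zero (C_ne_zero.2 hd)) ?_
    rw [← hcoord₁, mul_twistCoord_one hf, hcoord₀, hcoord₁, ← map_mul, mul_assoc, ← expand_C p d,
      ← map_mul (expand k p), ← hscale]

theorem eq_frobPoint_or_eq_neg_frobPoint {p : ℕ} [Fact p.Prime] (hp : ringChar (ZMod p) ≠ 2)
    {A B : ZMod p} (h₃ : (3 : ZMod p) ≠ 0) (hA : A ≠ 0) (hB : B ≠ 0)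
    (hdisc : 4 * A ^ 3 + 27 * B ^ 2 ≠ 0) {P : (twistCurve A B (shortCubic A B)).Point}
    (hP : HasMultiplier (ratFuncDeriv (ZMod p))
      (algebraMap (ZMod p)[X] (RatFunc (ZMod p)) (shortCubic A B)) 0 P)
    (hdeg : twistDegree P = p) (hlead : leadingVec (twistCoord P) 1 = 0) :
    P = frobPoint hp A B ∨ P = -frobPoint hp A B := by
  have hf := (shortCubic_monic A B).ne_zero
  obtain ⟨a, b, x, y, h, ha, rfl, hx⟩ := exists_eq_some_of_twistDegree_eq p hf hP hdeg hlead
  have hcomp (w : (ZMod p)[X]) : (shortCubic A B).comp w = w ^ 3 + C A * w + C B := by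
    rw [shortCubic, add_comp, add_comp, mul_comp, pow_comp, X_comp, C_comp, C_comp]
  have hy : y ^ 2 = algebraMap (ZMod p)[X] (RatFunc (ZMod p))
      (shortCubic A B ^ 3 * (shortCubic A B).comp (C a * X + C b) ^ p) := by
    rw [shortCurve_equation_iff.1 h.1, hx, ← ZMod.expand_card]
    simp only [← map_pow, ← map_mul, ← map_add]
    congr 1
    rw [hcomp]
    simp only [map_add, map_pow, map_mul, expand_C]
    ring
  obtain ⟨rfl, rfl⟩ := eq_one_and_eq_zero_of_shortCubic_dvd_comp h₃ hA hB ha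
    (dvd_of_sq_eq_algebraMap_cube_mul_pow (shortCubic_separable hdisc).squarefree
      (Fact.out : p.Prime).ne_zero hy)
  rw [C_1, one_mul, C_0, add_zero, expand_X] at hx
  refine Affine.Point.X_eq_iff.1 ?_
  rw [hx, map_mul, ZMod.card]

end FrobeniusUniqueness

/-! ### The split case -/

section ComplexMultiplication

variable {k : Type*} [Field k] {r c : k}

open Classical in
/-- The point attached to the endomorphism `m + n √-6`. -/
noncomputable def cmPoint (hr : r ^ 2 = 2) (hc : c ^ 2 = -6) (h₂ : (2 : k) ≠ 0) (h₃ : (3 : k) ≠ 0)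
    (m n : ℤ) : (twistCurve (6 * r - 15) (24 - 14 * r) (cmCubic r)).Point :=
  m • idPoint h₂ (6 * r - 15) (24 - 14 * r) + n • isogPoint hr hc h₂ h₃

variable (hr : r ^ 2 = 2) (hc : c ^ 2 = -6) (h₂ : (2 : k) ≠ 0) (h₃ : (3 : k) ≠ 0)

open Classical in
theorem cmPoint_sub_idPoint (m n : ℤ) :
    cmPoint hr hc h₂ h₃ m n - idPoint h₂ (6 * r - 15) (24 - 14 * r) =
      cmPoint hr hc h₂ h₃ (m - 1) n := by
  rw [cmPoint, cmPoint, sub_smul, one_smul]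
  abel

open Classical in
theorem neg_cmPoint (m n : ℤ) : -cmPoint hr hc h₂ h₃ m n = cmPoint hr hc h₂ h₃ (-m) (-n) := by
  rw [cmPoint, cmPoint, neg_add, neg_smul, neg_smul]

theorem hasMultiplier_cmPoint {m n : ℤ} (hmn : (m : k) + n * c = 0) :
    HasMultiplier (ratFuncDeriv k) (algebraMap k[X] (RatFunc k) (cmCubic r)) 0
      (cmPoint hr hc h₂ h₃ m n) := by
  have h := (hasMultiplier_idPoint h₂ (6 * r - 15) (24 - 14 * r)).zsmul_add_zsmul (by
    simp only [Derivation.leibniz, Derivation.leibniz_pow, ratFuncDeriv_algebraMap, map_mul,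
      map_pow, derivative_C, map_zero, smul_eq_mul, nsmul_eq_mul, mul_zero, add_zero]
    push_cast
    ring) (hasMultiplier_isogPoint hr hc h₂ h₃) m n
  have hzero : (m : RatFunc k) * 1 + n * algebraMap k[X] (RatFunc k) (C c) = 0 := by
    have hmn' := congr(algebraMap k[X] (RatFunc k) (C $hmn))
    simpa only [map_add, map_mul, map_intCast, map_zero, mul_one] using hmn'
  rwa [hzero] at h

theorem leadingVec_twistCoord_cmPoint (m n : ℤ) :
    leadingVec (twistCoord (cmPoint hr hc h₂ h₃ m n)) 1 = 0 := by
  have := isElliptic_shortCurve h₂ (disc_cmCubic_ne_zero hr h₂ h₃)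
  classical
  let poles := poleSubgroup (f := cmCubic r) (6 * r - 15) (24 - 14 * r)
    (shortCubic_monic _ _).ne_zero
  have hid : idPoint h₂ (6 * r - 15) (24 - 14 * r) ∈ poles := (twistDegree_idPoint h₂ _ _).2
  have hisog : isogPoint hr hc h₂ h₃ ∈ poles := (twistDegree_isogPoint hr hc h₂ h₃).2
  exact add_mem (zsmul_mem hid m) (zsmul_mem hisog n)

theorem exists_twistDegree_cmPoint_eq : ∃ b : ℤ, ∀ m n,
    (twistDegree (cmPoint hr hc h₂ h₃ m n) : ℤ) = m ^ 2 + m * n * b + 6 * n ^ 2 := by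
  have := isElliptic_shortCurve h₂ (disc_cmCubic_ne_zero hr h₂ h₃)
  classical
  refine ⟨twistDegree (idPoint h₂ _ _ + isogPoint hr hc h₂ h₃) - 1 - 6, fun m n => ?_⟩
  rw [cmPoint, twistDegree_zsmul_add_zsmul (shortCubic_monic _ _).ne_zero,
    (twistDegree_idPoint h₂ _ _).1, (twistDegree_isogPoint hr hc h₂ h₃).1]
  push_cast
  ring

end ComplexMultiplication

section Split

variable {p : ℕ} [Fact p.Prime] {r c : ZMod p}

theorem twistDegree_cmPoint (hp : 5 < p) (hr : r ^ 2 = 2) (hc : c ^ 2 = -6)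
    (h₂ : (2 : ZMod p) ≠ 0) (h₃ : (3 : ZMod p) ≠ 0) (m n : ℤ) :
    (twistDegree (cmPoint hr hc h₂ h₃ m n) : ℤ) = m ^ 2 + 6 * n ^ 2 := by
  obtain ⟨b, hb⟩ := exists_twistDegree_cmPoint_eq hr hc h₂ h₃
  suffices b = 0 by rw [hb, this, mul_zero, add_zero]
  have hbound : b ^ 2 ≤ 24 := by
    have h := hb b (-2)
    nlinarith
  obtain ⟨s, hs⟩ := ZMod.intCast_surjective (-c)
  have hs₆ : (p : ℤ) ∣ s ^ 2 + 6 := by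
    rw [← ZMod.intCast_zmod_eq_zero_iff_dvd]
    push_cast
    rw [hs]
    linear_combination hc
  have hsb : (p : ℤ) ∣ s * b := by
    have hdvd := dvd_twistDegree_of_hasMultiplier_zero p
      (shortCubic_monic (6 * r - 15) (24 - 14 * r)).ne_zero
      (hasMultiplier_cmPoint hr hc h₂ h₃ (m := s) (n := 1) (by rw [hs]; push_cast; ring))
    have hdvd' := dvd_sub (Int.natCast_dvd_natCast.2 hdvd) hs₆
    rwa [hb, show s ^ 2 + s * 1 * b + 6 * 1 ^ 2 - (s ^ 2 + 6) = s * b by ring] at hdvd'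
  refine Int.eq_zero_of_abs_lt_dvd (m := p) ?_ ?_
  · refine ((Nat.prime_iff_prime_int.1 Fact.out).dvd_or_dvd hsb).resolve_left fun hps => ?_
    have hp₆ : p ∣ 6 := by
      exact_mod_cast (Int.dvd_iff_dvd_of_dvd_add hs₆).1 (dvd_pow hps two_ne_zero)
    have hle := Nat.le_of_dvd (by norm_num) hp₆
    obtain rfl : p = 6 := by omega
    exact absurd (Fact.out : Nat.Prime 6) (by norm_num)
  · have hp' : (5 : ℤ) < p := mod_cast hp
    exact (abs_lt_of_sq_lt_sq (by linarith) (by norm_num)).trans hp'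

theorem exists_add_mul_eq_zero_and_sq_eq (hc : c ^ 2 = -6) {x y : ℤ}
    (hxy : (p : ℤ) = x ^ 2 + 6 * y ^ 2) : ∃ z : ℤ, (x : ZMod p) + z * c = 0 ∧ z ^ 2 = y ^ 2 := by
  have h := congr(($hxy : ZMod p))
  push_cast at h
  rw [CharP.cast_eq_zero] at h
  have hprod : ((x : ZMod p) + y * c) * (x + (-y : ℤ) * c) = 0 := by
    push_cast
    linear_combination -h - y ^ 2 * hc
  rcases mul_eq_zero.1 hprod with h | h
  exacts [⟨y, h, rfl⟩, ⟨-y, h, neg_sq y⟩]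

theorem sum_quadraticChar_cmCubic_sq (hp : 5 < p) (hr : r ^ 2 = 2) (hc : c ^ 2 = -6)
    (hA : 6 * r - 15 ≠ 0) (hB : 24 - 14 * r ≠ 0) {x y : ℤ} (hxy : (p : ℤ) = x ^ 2 + 6 * y ^ 2) :
    (∑ t, quadraticChar (ZMod p) ((cmCubic r).eval t)) ^ 2 = 4 * x ^ 2 := by
  classical
  have hp₂ : ringChar (ZMod p) ≠ 2 := by
    rw [ZMod.ringChar_zmod_n]
    omega
  have h₂ := Ring.two_ne_zero hp₂
  have h₃ : (3 : ZMod p) ≠ 0 := ZMod.prime_ne_zero p 3 (by omega)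
  have hdisc := disc_cmCubic_ne_zero hr h₂ h₃
  obtain ⟨z, hz, hzy⟩ := exists_add_mul_eq_zero_and_sq_eq hc hxy
  have hdeg : twistDegree (cmPoint hr hc h₂ h₃ x z) = p := by
    have h := twistDegree_cmPoint hp hr hc h₂ h₃ x z
    rw [hzy, ← hxy] at h
    exact_mod_cast h
  have hcount := twistDegree_frobPoint_sub_idPoint hp₂ hdisc
  rw [ZMod.card] at hcount
  change _ = p + 1 + ∑ t, quadraticChar (ZMod p) ((cmCubic r).eval t) at hcount
  rcases eq_frobPoint_or_eq_neg_frobPoint hp₂ h₃ hA hB hdisc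
    (hasMultiplier_cmPoint hr hc h₂ h₃ hz) hdeg (leadingVec_twistCoord_cmPoint hr hc h₂ h₃ x z)
    with h | h
  · rw [← h, cmPoint_sub_idPoint, twistDegree_cmPoint hp] at hcount
    have hsum : ∑ t, quadraticChar (ZMod p) ((cmCubic r).eval t) = -2 * x := by
      linear_combination -hcount - hxy + 6 * hzy
    rw [hsum]
    ring
  · rw [← neg_eq_iff_eq_neg.2 h, neg_cmPoint, cmPoint_sub_idPoint, twistDegree_cmPoint hp]
      at hcount
    have hsum : ∑ t, quadraticChar (ZMod p) ((cmCubic r).eval t) = 2 * x := by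
      linear_combination -hcount - hxy + 6 * hzy
    rw [hsum]
    ring

end Split

/-! ### The inert case -/

section Cartier

theorem iterate_derivation_mul_pow_char {R A : Type*} [CommRing R] [CommRing A] [Algebra R A]
    (p : ℕ) [CharP A p] (D : Derivation R A A) (n : ℕ) (x y : A) :
    D^[n] (x * y ^ p) = D^[n] x * y ^ p := by
  have hy : D (y ^ p) = 0 := by
    rw [D.leibniz_pow, ← Nat.cast_smul_eq_nsmul A, CharP.cast_eq_zero, zero_smul]
  have hcomm : Function.Commute D (· * y ^ p) := fun z => by
    simp only [D.leibniz, hy, smul_eq_mul, mul_zero, zero_add, mul_comm]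
  exact (hcomm.iterate_left n).eq x

variable {p : ℕ} [Fact p.Prime]

theorem natCast_choose_add_self (n : ℕ) : (((n + p).choose p : ℕ) : ZMod p) = (n / p : ℕ) + 1 := by
  have hp := (Fact.out : p.Prime).pos
  rw [(ZMod.natCast_eq_natCast_iff _ _ _).2
    (Choose.choose_modEq_choose_mod_mul_choose_div_nat (p := p) (n := n + p) (k := p)),
    Nat.mod_self, Nat.choose_zero_right, one_mul, Nat.div_self hp, Nat.choose_one_right,
    Nat.add_div_right n hp, Nat.cast_succ]

theorem hasseDeriv_pow_char (g : (ZMod p)[X]) : hasseDeriv p (g ^ p) = derivative g ^ p := by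
  have hp := (Fact.out : p.Prime).pos
  rw [← ZMod.expand_card, ← ZMod.expand_card]
  ext n
  simp only [hasseDeriv_coeff, natCast_choose_add_self, coeff_expand hp, coeff_derivative,
    Nat.dvd_add_self_right, Nat.add_div_right n hp, mul_ite, zero_mul, mul_comm]

theorem map_hasseDeriv {R S : Type*} [Semiring R] [Semiring S] (φ : R →+* S) (n : ℕ) (f : R[X]) :
    (hasseDeriv n f).map φ = hasseDeriv n (f.map φ) := by
  ext i
  rw [coeff_map, hasseDeriv_coeff, hasseDeriv_coeff, coeff_map, map_mul, map_natCast]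

theorem iterate_derivative_char (g : (ZMod p)[X]) : derivative^[p] g = 0 := by
  rw [← factorial_smul_hasseDeriv, LinearMap.smul_apply, ← Nat.cast_smul_eq_nsmul (ZMod p),
    (ZMod.natCast_eq_zero_iff _ _).2 ((Nat.Prime.dvd_factorial Fact.out).2 le_rfl), zero_smul]

-- Lifting `g` to characteristic zero, `p G^(p-1) G'` is the derivative of `G^p`.
theorem iterate_derivative_pow_mul_derivative (g : (ZMod p)[X]) :
    derivative^[p - 1] (g ^ (p - 1) * derivative g) = -derivative g ^ p := by
  have hp : p.Prime := Fact.out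
  obtain ⟨G, rfl⟩ := map_surjective _ (ZMod.ringHom_surjective (Int.castRingHom (ZMod p))) g
  have hlift : derivative^[p - 1] (G ^ (p - 1) * derivative G) =
      (p - 1).factorial • hasseDeriv p (G ^ p) := by
    have hpG : (p : ℤ[X]) * (G ^ (p - 1) * derivative G) = derivative (G ^ p) := by
      rw [derivative_pow, C_eq_natCast, mul_assoc]
    refine mul_left_cancel₀ (Nat.cast_ne_zero.2 hp.ne_zero) ?_
    rw [← iterate_derivative_natCast_mul, hpG, ← Function.iterate_succ_apply,
      Nat.succ_eq_add_one, Nat.sub_add_cancel hp.one_le, ← factorial_smul_hasseDeriv,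
      LinearMap.smul_apply, ← Nat.mul_factorial_pred hp.ne_zero, mul_smul, nsmul_eq_mul]
  have hmap := congr(Polynomial.map (Int.castRingHom (ZMod p)) $hlift)
  rw [← iterate_derivative_map, Polynomial.map_mul, Polynomial.map_pow, ← derivative_map,
    nsmul_eq_mul, Polynomial.map_mul, Polynomial.map_natCast, map_hasseDeriv, Polynomial.map_pow,
    hasseDeriv_pow_char, ← C_eq_natCast, ZMod.wilsons_lemma] at hmap
  rw [hmap, C_neg, C_1, neg_one_mul]

theorem exists_algebraMap_eq_mul_pow {k : Type*} [Field k] {n : ℕ} (hn : n ≠ 0) (x : RatFunc k) :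
    ∃ g h : k[X], h ≠ 0 ∧
      x * algebraMap k[X] (RatFunc k) h ^ n = algebraMap k[X] (RatFunc k) g := by
  refine ⟨x.num * x.denom ^ (n - 1), x.denom, x.denom_ne_zero, ?_⟩
  have hx := x.num_div_denom
  rw [div_eq_iff (RatFunc.algebraMap_ne_zero x.denom_ne_zero)] at hx
  rw [map_mul, map_pow, hx, mul_assoc, mul_pow_sub_one hn]

theorem iterate_ratFuncDeriv_algebraMap {k : Type*} [Field k] (n : ℕ) (g : k[X]) :
    (ratFuncDeriv k)^[n] (algebraMap k[X] (RatFunc k) g) =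
      algebraMap k[X] (RatFunc k) (derivative^[n] g) :=
  ((show Function.Semiconj (algebraMap k[X] (RatFunc k)) derivative (ratFuncDeriv k) from
    fun u => (ratFuncDeriv_algebraMap k u).symm).iterate_right n g).symm

theorem iterate_ratFuncDeriv_char (x : RatFunc (ZMod p)) : (ratFuncDeriv (ZMod p))^[p] x = 0 := by
  obtain ⟨g, h, hh, hx⟩ := exists_algebraMap_eq_mul_pow (Fact.out : p.Prime).ne_zero x
  refine (mul_eq_zero.1 ?_).resolve_right (pow_ne_zero p (RatFunc.algebraMap_ne_zero hh))
  rw [← iterate_derivation_mul_pow_char, hx, iterate_ratFuncDeriv_algebraMap,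
    iterate_derivative_char, map_zero]

theorem iterate_ratFuncDeriv_pow_mul (x : RatFunc (ZMod p)) :
    (ratFuncDeriv (ZMod p))^[p - 1] (x ^ (p - 1) * ratFuncDeriv (ZMod p) x) =
      -ratFuncDeriv (ZMod p) x ^ p := by
  have hp : p.Prime := Fact.out
  obtain ⟨g, h, hh, hx⟩ := exists_algebraMap_eq_mul_pow hp.ne_zero x
  set a := algebraMap (ZMod p)[X] (RatFunc (ZMod p))
  have hδ : ratFuncDeriv (ZMod p) x * a h ^ p = a (derivative g) := by
    rw [← ratFuncDeriv_algebraMap, ← hx]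
    exact (iterate_derivation_mul_pow_char p (ratFuncDeriv (ZMod p)) 1 x (a h)).symm
  refine mul_right_cancel₀ (pow_ne_zero p (pow_ne_zero p (RatFunc.algebraMap_ne_zero hh))) ?_
  rw [← iterate_derivation_mul_pow_char, neg_mul, ← mul_pow, hδ]
  have hsplit : x ^ (p - 1) * ratFuncDeriv (ZMod p) x * (a h ^ p) ^ p =
      a (g ^ (p - 1) * derivative g) := by
    rw [map_mul, map_pow, ← hδ, ← hx, ← mul_pow_sub_one hp.ne_zero (a h ^ p)]
    ring
  rw [hsplit, iterate_ratFuncDeriv_algebraMap, iterate_derivative_pow_mul_derivative, map_neg,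
    map_pow]

theorem iterate_ratFuncDeriv_pow_mul_eq_zero {j : ℕ} (hj : ¬p ∣ j + 1) (x : RatFunc (ZMod p)) :
    (ratFuncDeriv (ZMod p))^[p - 1] (x ^ j * ratFuncDeriv (ZMod p) x) = 0 := by
  have hp : p.Prime := Fact.out
  have hne : ((j + 1 : ℕ) : ZMod p) ≠ 0 := mt (ZMod.natCast_eq_zero_iff _ _).1 hj
  have hderiv : x ^ j * ratFuncDeriv (ZMod p) x =
      ratFuncDeriv (ZMod p) (((j + 1 : ℕ) : ZMod p)⁻¹ • x ^ (j + 1)) := by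
    rw [Derivation.map_smul, Derivation.leibniz_pow, Nat.add_sub_cancel,
      ← Nat.cast_smul_eq_nsmul (ZMod p),
      inv_smul_smul₀ hne, smul_eq_mul]
  rw [hderiv, ← Function.iterate_succ_apply, Nat.succ_eq_add_one, Nat.sub_add_cancel hp.one_le,
    iterate_ratFuncDeriv_char]

theorem iterate_ratFuncDeriv_aeval_mul {g : (ZMod p)[X]} (hg : g.natDegree < 2 * p - 1)
    (x : RatFunc (ZMod p)) :
    (ratFuncDeriv (ZMod p))^[p - 1] (aeval x g * ratFuncDeriv (ZMod p) x) =
      -g.coeff (p - 1) • ratFuncDeriv (ZMod p) x ^ p := by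
  have hp := (Fact.out : p.Prime).two_le
  rw [aeval_eq_sum_range' hg, sum_mul]
  simp only [← Derivation.coeFn_coe, ← Module.End.pow_apply, map_sum, map_smul, smul_mul_assoc]
  simp only [Derivation.coeFn_coe, Module.End.pow_apply]
  rw [sum_eq_single (p - 1)]
  · rw [iterate_ratFuncDeriv_pow_mul, smul_neg, neg_smul]
  · intro j hj hne
    have hdvd : ¬p ∣ j + 1 := by
      rintro ⟨t, ht⟩
      rw [mem_range] at hj
      have htwo : t < 2 := lt_of_mul_lt_mul_left (by omega : p * t < p * 2) p.zero_le
      interval_cases t <;> omega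
    rw [iterate_ratFuncDeriv_pow_mul_eq_zero hdvd, smul_zero]
  · intro h
    exact absurd (mem_range.2 (by omega)) h

end Cartier

section Inert

variable {p : ℕ} [Fact p.Prime] {r : ZMod p}

theorem iterate_ratFuncDeriv_algebraMap_eq {g : (ZMod p)[X]} (hg : g.natDegree < 2 * p - 1) :
    (ratFuncDeriv (ZMod p))^[p - 1] (algebraMap (ZMod p)[X] (RatFunc (ZMod p)) g) =
      -g.coeff (p - 1) • 1 := by
  have h := iterate_ratFuncDeriv_aeval_mul hg (algebraMap (ZMod p)[X] (RatFunc (ZMod p)) X)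
  rwa [aeval_algebraMap_apply, aeval_X_left_apply, ratFuncDeriv_algebraMap, derivative_X, map_one,
    mul_one, one_pow] at h

theorem cmCubic_pow_mul_ratFuncDeriv_isogMap_pow (hp : 3 < p) (hr : r ^ 2 = 2)
    (h₆ : (-6 : ZMod p) ^ (p / 2) = -1) :
    algebraMap (ZMod p)[X] (RatFunc (ZMod p)) (cmCubic r ^ (p / 2)) *
        ratFuncDeriv (ZMod p) (isogMap r) ^ p =
      -(aeval (isogMap r) (cmCubic r ^ (p / 2)) * ratFuncDeriv (ZMod p) (isogMap r)) := by
  have h₂ : (2 : ZMod p) ≠ 0 := ZMod.prime_ne_zero p 2 (by omega)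
  have h₃ : (3 : ZMod p) ≠ 0 := ZMod.prime_ne_zero p 3 hp.ne'
  have hodd : 2 * (p / 2) + 1 = p :=
    Nat.two_mul_div_two_add_one_of_odd ((Fact.out : p.Prime).odd_of_ne_two (by omega))
  have haeval : aeval (isogMap r) (cmCubic r) = isogMap r ^ 3 +
      algebraMap (ZMod p)[X] (RatFunc (ZMod p)) (C (6 * r - 15)) * isogMap r +
        algebraMap (ZMod p)[X] (RatFunc (ZMod p)) (C (24 - 14 * r)) := by
    rw [cmCubic, shortCubic, map_add, map_add, map_mul, map_pow, aeval_X, aeval_C, aeval_C]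
    rfl
  have h₆' : (-6 : RatFunc (ZMod p)) ^ (p / 2) = -1 := by
    have h := congr(algebraMap (ZMod p) (RatFunc (ZMod p)) $h₆)
    simpa only [map_pow, map_neg, map_ofNat, map_one] using h
  have h := congr($(cmCubic_mul_ratFuncDeriv_isogMap_sq hr h₂ h₃) ^ (p / 2))
  rw [← haeval, mul_pow, mul_pow, h₆', ← pow_mul] at h
  have hpow : ratFuncDeriv (ZMod p) (isogMap r) ^ p =
      ratFuncDeriv (ZMod p) (isogMap r) ^ (2 * (p / 2)) * ratFuncDeriv (ZMod p) (isogMap r) := by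
    rw [← pow_succ, hodd]
  rw [hpow, map_pow, map_pow]
  linear_combination ratFuncDeriv (ZMod p) (isogMap r) * h

theorem sum_eval_cmCubic_pow_eq_zero (hp : 3 < p) (hr : r ^ 2 = 2)
    (h₆ : (-6 : ZMod p) ^ (p / 2) = -1) : ∑ t, (cmCubic r).eval t ^ (p / 2) = 0 := by
  set g := cmCubic r ^ (p / 2)
  have hg : g.natDegree = 3 * (p / 2) := by
    rw [natDegree_pow, natDegree_shortCubic, mul_comm]
  have hdeg : g.natDegree < 2 * p - 1 := by omega
  have h₂ : (2 : ZMod p) ≠ 0 := ZMod.prime_ne_zero p 2 (by omega)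
  have h₃ : (3 : ZMod p) ≠ 0 := ZMod.prime_ne_zero p 3 hp.ne'
  have hcoeff : g.coeff (p - 1) = 0 := by
    have h := congr((ratFuncDeriv (ZMod p))^[p - 1]
      $(cmCubic_pow_mul_ratFuncDeriv_isogMap_pow hp hr h₆))
    rw [iterate_derivation_mul_pow_char, iterate_ratFuncDeriv_algebraMap_eq hdeg, iterate_map_neg,
      iterate_ratFuncDeriv_aeval_mul hdeg] at h
    have htwo : (2 * g.coeff (p - 1)) • ratFuncDeriv (ZMod p) (isogMap r) ^ p = 0 := by
      rw [neg_smul, neg_smul, neg_neg, neg_mul, smul_mul_assoc, one_mul] at h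
      rw [two_mul, add_smul]
      linear_combination -h
    have hδ := pow_ne_zero p (ratFuncDeriv_isogMap_ne_zero hr h₂ h₃)
    exact (mul_eq_zero.1 ((smul_eq_zero.1 htwo).resolve_right hδ)).resolve_left h₂
  have hdeg' : g.natDegree < 2 * (Fintype.card (ZMod p) - 1) := by
    have hodd := (Fact.out : p.Prime).eq_two_or_odd
    rw [ZMod.card]
    omega
  have hsum := sum_eval_eq_neg_coeff hdeg'
  rw [ZMod.card, hcoeff, neg_zero] at hsum
  simpa only [g, eval_pow] using hsum

end Inert

/-! ### Primes of the form `x² + 6y²` -/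

section QuadraticForm

variable {p : ℕ} [Fact p.Prime]

theorem legendreSym_neg_six (hp : p ≠ 2) : legendreSym p (-6) = jacobiSym (-6) (p % 24) := by
  rw [jacobiSym.legendreSym.to_jacobiSym,
    jacobiSym.mod_right _ ((Fact.out : p.Prime).odd_of_ne_two hp)]
  rfl

theorem exists_sq_eq_neg_six (hp : p % 24 = 1 ∨ p % 24 = 7) : ∃ c : ZMod p, c ^ 2 = -6 := by
  have hJ : jacobiSym (-6) p = 1 := by
    rw [← jacobiSym.legendreSym.to_jacobiSym, legendreSym_neg_six (by rintro rfl; omega)]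
    rcases hp with h | h <;> rw [h] <;> norm_num
  obtain ⟨c, hc⟩ := ZMod.isSquare_of_jacobiSym_eq_one hJ
  exact ⟨c, by rw [sq, ← hc]; norm_num⟩

theorem legendreSym_neg_six_eq_neg_one (hp : p % 24 = 17 ∨ p % 24 = 23) :
    legendreSym p (-6) = -1 := by
  rw [legendreSym_neg_six (by rintro rfl; omega)]
  rcases hp with h | h <;> rw [h] <;> norm_num

theorem exists_ne_natCast_sub_mul_eq (c : ZMod p) :
    ∃ a b : ℕ × ℕ, a ≠ b ∧ (a.1 : ZMod p) - c * a.2 = b.1 - c * b.2 ∧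
      (a.1 ≤ p.sqrt ∧ a.2 ≤ p.sqrt) ∧ b.1 ≤ p.sqrt ∧ b.2 ≤ p.sqrt := by
  have hcard : #(univ : Finset (ZMod p)) < #(range (p.sqrt + 1) ×ˢ range (p.sqrt + 1)) := by
    rw [card_univ, ZMod.card, card_product, card_range]
    exact p.lt_succ_sqrt
  obtain ⟨a, ha, b, hb, hab, h⟩ := exists_ne_map_eq_of_card_lt_of_maps_to hcard
    (f := fun q : ℕ × ℕ => (q.1 : ZMod p) - c * q.2) fun _ _ => mem_univ _
  simp only [mem_product, mem_range, Nat.lt_succ_iff] at ha hb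
  exact ⟨a, b, hab, h, ha, hb⟩

theorem sub_sq_lt_of_le_sqrt {a b : ℕ} (ha : a ≤ p.sqrt) (hb : b ≤ p.sqrt) :
    ((a : ℤ) - b) ^ 2 < p := by
  have hp : p.sqrt ^ 2 < p := by
    refine lt_of_le_of_ne p.sqrt_le' fun h => ?_
    exact (Fact.out : p.Prime).prime.not_isSquare ⟨p.sqrt, by rw [← sq, h]⟩
  calc ((a : ℤ) - b) ^ 2 ≤ (p.sqrt : ℤ) ^ 2 := sq_le_sq' (by omega) (by omega)
    _ < p := mod_cast hp

theorem exists_sq_add_mul_sq_eq_mul {d : ℕ} (hd : 0 < d) {c : ZMod p} (hc : c ^ 2 = -d) :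
    ∃ x y k : ℤ, 0 < k ∧ k ≤ d ∧ x ^ 2 + d * y ^ 2 = k * p := by
  obtain ⟨a, b, hab, h, ⟨ha₁, ha₂⟩, hb₁, hb₂⟩ := exists_ne_natCast_sub_mul_eq c
  set x : ℤ := a.1 - b.1 with hx
  set y : ℤ := a.2 - b.2 with hy
  have hp : (0 : ℤ) < p := mod_cast (Fact.out : p.Prime).pos
  have : (0 : ℤ) < d := mod_cast hd
  have hxp : x ^ 2 < p := sub_sq_lt_of_le_sqrt ha₁ hb₁
  have hyp : y ^ 2 < p := sub_sq_lt_of_le_sqrt ha₂ hb₂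
  have hdvd : (p : ℤ) ∣ x ^ 2 + d * y ^ 2 := by
    rw [← ZMod.intCast_zmod_eq_zero_iff_dvd, hx, hy]
    push_cast
    linear_combination ((a.1 : ZMod p) - b.1 + c * (a.2 - b.2)) * h + (a.2 - b.2 : ZMod p) ^ 2 * hc
  have hpos : 0 < x ^ 2 + d * y ^ 2 := by
    by_cases hx₀ : x = 0
    · have hy₀ : y ≠ 0 := fun hy₀ => hab (Prod.ext (by omega) (by omega))
      positivity
    · positivity
  obtain ⟨k, hk⟩ := exists_eq_mul_left_of_dvd hdvd
  refine ⟨x, y, k, pos_of_mul_pos_left (hk ▸ hpos) hp.le, ?_, hk⟩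
  have hlt : k * p < (d + 1) * p := by nlinarith
  exact Int.lt_add_one_iff.1 (lt_of_mul_lt_mul_right hlt hp.le)

theorem sq_emod_three (x : ℤ) : x ^ 2 % 3 = 0 ∨ x ^ 2 % 3 = 1 := by
  have h : x % 3 = 0 ∨ x % 3 = 1 ∨ x % 3 = 2 := by omega
  rcases h with h | h | h <;> norm_num [sq, Int.mul_emod, h]

-- The multiples `2p`, `3p`, `5p` are excluded modulo `3`; from `4p` and `6p` one descends to `p`.
theorem exists_eq_sq_add_six_mul_sq (hp : p % 3 = 1) {c : ZMod p} (hc : c ^ 2 = -6) :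
    ∃ x y : ℤ, (p : ℤ) = x ^ 2 + 6 * y ^ 2 := by
  obtain ⟨x, y, k, hk₀, hk₆, h⟩ := exists_sq_add_mul_sq_eq_mul (d := 6) (by norm_num) hc
  push_cast at hk₆ h
  have hx₃ := sq_emod_three x
  have hx_two : 2 ∣ x ^ 2 → 2 ∣ x := Int.prime_two.dvd_of_dvd_pow
  have hx_three : 3 ∣ x ^ 2 → 3 ∣ x := Int.prime_three.dvd_of_dvd_pow
  interval_cases k
  · exact ⟨x, y, by linarith⟩
  · omega
  · obtain ⟨z, rfl⟩ := hx_three (by omega)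
    have hy₃ := sq_emod_three y
    rw [mul_pow] at h
    omega
  · obtain ⟨z, rfl⟩ := hx_two (by omega)
    rw [mul_pow] at h
    obtain ⟨t, rfl⟩ : 2 ∣ y := Int.prime_two.dvd_of_dvd_pow (n := 2) (by omega)
    exact ⟨z, t, by linarith⟩
  · omega
  · have h₂ := hx_two (by omega)
    have h₃ := hx_three (by omega)
    obtain ⟨z, rfl⟩ : 6 ∣ x := by omega
    exact ⟨y, z, by linarith⟩

end QuadraticForm

/-! ### The truncated sum as the square of a character sum -/

section Conclusion

variable {p : ℕ} [Fact p.Prime] {r : ZMod p}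

theorem eval_cmCubic_affine (h₂ : (2 : ZMod p) ≠ 0) (h₃ : (3 : ZMod p) ≠ 0) (hr : r ^ 2 = 2)
    (x : ZMod p) :
    (cmCubic r).eval (36 * x + 3) = 108 ^ 2 * (4 * x ^ 3 + (x + (2 + r) / 108) ^ 2) := by
  have h₁₀₈ : (108 : ZMod p) ≠ 0 := by
    rw [show (108 : ZMod p) = 2 ^ 2 * 3 ^ 3 by norm_num]
    positivity
  rw [cmCubic, shortCubic]
  simp only [eval_add, eval_mul, eval_pow, eval_X, eval_C]
  field_simp
  linear_combination -hr

theorem sum_eval_cmCubic_pow_eq_neg_sum (hp : 3 < p) (hr : r ^ 2 = 2) :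
    ∑ t, (cmCubic r).eval t ^ (p / 2) =
      -∑ k ∈ range p, (trichoose k : ZMod p) * ((2 + r) / 108) ^ k := by
  have hodd := (Fact.out : p.Prime).eq_two_or_odd
  have h₂ : (2 : ZMod p) ≠ 0 := ZMod.prime_ne_zero p 2 (by omega)
  have h₃ : (3 : ZMod p) ≠ 0 := ZMod.prime_ne_zero p 3 hp.ne'
  have h₃₆ : (36 : ZMod p) ≠ 0 := by
    rw [show (36 : ZMod p) = 2 ^ 2 * 3 ^ 2 by norm_num]
    positivity
  have h₁₀₈ : (108 : ZMod p) ≠ 0 := by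
    rw [show (108 : ZMod p) = 2 ^ 2 * 3 ^ 3 by norm_num]
    positivity
  set g : (ZMod p)[X] := C 4 * X ^ 3 + (X + C ((2 + r) / 108)) ^ 2 with hg
  have hdeg : (g ^ (p / 2)).natDegree < 2 * (Fintype.card (ZMod p) - 1) := by
    have h : g.natDegree ≤ 3 := by
      rw [hg]
      compute_degree
    have := natDegree_pow_le_of_le (p / 2) h
    rw [ZMod.card]
    omega
  have hsum := sum_eval_eq_neg_coeff hdeg
  rw [ZMod.card, coeff_four_mul_X_cube_add_sq_pow (by omega)] at hsum
  rw [← hsum, ← Equiv.sum_comp ((Equiv.mulLeft₀ 36 h₃₆).trans (Equiv.addRight 3))]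
  refine sum_congr rfl fun x _ => ?_
  change (cmCubic r).eval (36 * x + 3) ^ (p / 2) = (g ^ (p / 2)).eval x
  rw [eval_cmCubic_affine h₂ h₃ hr, mul_pow, ← pow_mul, show 2 * (p / 2) = p - 1 by omega,
    ZMod.pow_card_sub_one_eq_one h₁₀₈, one_mul]
  simp [hg]

theorem sum_A_div_neg_eight_pow_eq_sq (hp : 3 < p) (hr : r ^ 2 = 2) :
    ∑ n ∈ range p, (A n : ZMod p) / (-8) ^ n = (∑ t, (cmCubic r).eval t ^ (p / 2)) ^ 2 := by
  have h₂ : (2 : ZMod p) ≠ 0 := ZMod.prime_ne_zero p 2 (by omega)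
  have h₃ : (3 : ZMod p) ≠ 0 := ZMod.prime_ne_zero p 3 hp.ne'
  have h₈ : (8 : ZMod p) ≠ 0 := by
    rw [show (8 : ZMod p) = 2 ^ 3 by norm_num]
    positivity
  have h₁₀₈ : (108 : ZMod p) ≠ 0 := by
    rw [show (108 : ZMod p) = 2 ^ 2 * 3 ^ 3 by norm_num]
    positivity
  have hx : (1 : ZMod p) - 4 * (-8)⁻¹ = 3 / 2 := by
    field_simp
    norm_num
  have hx₀ : (1 : ZMod p) - 4 * (-8)⁻¹ ≠ 0 := hx ▸ div_ne_zero h₃ h₂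
  have harg : ((-8 : ZMod p)⁻¹) ^ 2 / (1 - 4 * (-8)⁻¹) ^ 3 =
      (2 + r) / 108 * (1 - 27 * ((2 + r) / 108)) := by
    rw [hx]
    field_simp
    linear_combination 46656 * hr
  simp_rw [div_eq_mul_inv _ ((-8 : ZMod p) ^ _), ← inv_pow]
  rw [sum_A_mul_pow hx₀, harg, sum_clausenCoeff_mul_pow_eq_sq,
    sum_eval_cmCubic_pow_eq_neg_sum hp hr, neg_sq]

-- The norms from `ℤ[√2]` of the coefficients `6√2 - 15` and `24 - 14√2` are `9 * 17` and `8 * 23`.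
theorem cmCubic_coeffs_ne_zero (hp : 3 < p) (h₁₇ : p ≠ 17) (h₂₃ : p ≠ 23) (hr : r ^ 2 = 2) :
    6 * r - 15 ≠ 0 ∧ 24 - 14 * r ≠ 0 := by
  have : Fact (Nat.Prime 17) := ⟨by norm_num⟩
  have : Fact (Nat.Prime 23) := ⟨by norm_num⟩
  have h₂ : (2 : ZMod p) ≠ 0 := ZMod.prime_ne_zero p 2 (by omega)
  have h₃ : (3 : ZMod p) ≠ 0 := ZMod.prime_ne_zero p 3 hp.ne'
  constructor <;> intro h
  · refine mul_ne_zero (pow_ne_zero 2 h₃) (ZMod.prime_ne_zero p 17 h₁₇) ?_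
    push_cast
    linear_combination (-15 - 6 * r) * h + 36 * hr
  · refine mul_ne_zero (pow_ne_zero 3 h₂) (ZMod.prime_ne_zero p 23 h₂₃) ?_
    push_cast
    linear_combination (24 + 14 * r) * h + 196 * hr

theorem sum_A_div_neg_eight_pow_of_split (hp : p % 24 = 1 ∨ p % 24 = 7) (hr : r ^ 2 = 2)
    {c : ZMod p} (hc : c ^ 2 = -6) {x y : ℤ} (hxy : (p : ℤ) = x ^ 2 + 6 * y ^ 2) :
    ∑ n ∈ range p, (A n : ZMod p) / (-8) ^ n = 4 * (x : ZMod p) ^ 2 := by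
  have hp₁ := (Fact.out : p.Prime).one_lt
  obtain ⟨hA, hB⟩ := cmCubic_coeffs_ne_zero (by omega) (by omega) (by omega) hr
  have h := congr(($(sum_quadraticChar_cmCubic_sq (by omega) hr hc hA hB hxy) : ZMod p))
  have hchar : ringChar (ZMod p) ≠ 2 := by
    rw [ZMod.ringChar_zmod_n]
    omega
  have hpow : ∀ a : ZMod p, (quadraticChar (ZMod p) a : ZMod p) = a ^ (p / 2) := fun a => by
    rw [quadraticChar_eq_pow_of_char_ne_two' hchar, ZMod.card]
  push_cast at h
  simp_rw [hpow] at h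
  rw [sum_A_div_neg_eight_pow_eq_sq (by omega) hr, h]

theorem sum_A_div_neg_eight_pow_of_inert (hp : p % 24 = 17 ∨ p % 24 = 23) (hr : r ^ 2 = 2) :
    ∑ n ∈ range p, (A n : ZMod p) / (-8) ^ n = 0 := by
  have h₆ : (-6 : ZMod p) ^ (p / 2) = -1 := by
    have h := legendreSym.eq_pow p (-6)
    rw [legendreSym_neg_six_eq_neg_one hp] at h
    exact_mod_cast h.symm
  rw [sum_A_div_neg_eight_pow_eq_sq (by omega) hr, sum_eval_cmCubic_pow_eq_zero (by omega) hr h₆,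
    zero_pow two_ne_zero]

end Conclusion

end DombSum

theorem stmt_6 (p : ℕ) [Fact p.Prime]
    (hp : p % 24 = 1 ∨ p % 24 = 7 ∨ p % 24 = 17 ∨ p % 24 = 23) :
    ((p % 24 = 1 ∨ p % 24 = 7) →
      (∃ x y : ℤ, (p : ℤ) = x ^ 2 + 6 * y ^ 2) ∧
        ∀ x y : ℤ, (p : ℤ) = x ^ 2 + 6 * y ^ 2 →
          (∑ n ∈ Finset.range p, (A n : ZMod p) / (-8 : ZMod p) ^ n) = 4 * (x : ZMod p) ^ 2)
    ∧
    ((p % 24 = 17 ∨ p % 24 = 23) →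
      (∑ n ∈ Finset.range p, (A n : ZMod p) / (-8 : ZMod p) ^ n) = 0) := by
  obtain ⟨r, hr⟩ : ∃ r : ZMod p, r ^ 2 = 2 := by
    obtain ⟨r, hr⟩ := (ZMod.exists_sq_eq_two_iff (p := p) (by omega)).2 (by omega)
    exact ⟨r, by rw [hr, sq]⟩
  refine ⟨fun hsplit => ?_, fun hinert => DombSum.sum_A_div_neg_eight_pow_of_inert hinert hr⟩
  obtain ⟨c, hc⟩ : ∃ c : ZMod p, c ^ 2 = -6 := DombSum.exists_sq_eq_neg_six hsplit
  exact ⟨DombSum.exists_eq_sq_add_six_mul_sq (by omega) hc,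
    fun x y hxy => DombSum.sum_A_div_neg_eight_pow_of_split hsplit hr hc hxy⟩
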